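/- arXiv:2112.14711 — 9 statements merged into one kernel-verified Lean document; each statement's English description precedes it below -/
import Mathlib

section
/- An infinite principal ideal domain which has only finitely many prime elements up to associates contains infinitely many units. -/
/-- An infinite principal ideal domain which has only finitely many prime
elements up to associates contains infinitely many units. -/
theorem stmt4 {R : Type*} [CommRing R] [IsDomain R] [IsPrincipalIdealRing R] [Infinite R]
    (hfin : ∃ F : Finset R, ∀ p : R, Prime p → ∃ q ∈ F, Associated p q) :
    {u : R | IsUnit u}.Infinite := by
  classical
  obtain ⟨F, hF⟩ := hfin
  intro hU
  set P : R := ∏ q ∈ F.filter Prime, q with hP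
  have hP0 : P ≠ 0 := Finset.prod_ne_zero_iff.2 fun q hq => (Finset.mem_filter.1 hq).2.ne_zero
  have hinj : Function.Injective (fun x : R => 1 + x * P) := fun x y h =>
    mul_right_cancel₀ hP0 (add_left_cancel h)
  refine Set.infinite_range_of_injective hinj ((hU.union (Set.finite_singleton 0)).subset ?_)
  rintro _ ⟨x, rfl⟩
  by_cases h0 : 1 + x * P = 0
  · exact Or.inr h0
  left
  by_contra hu
  obtain ⟨p, hp, hd⟩ := WfDvdMonoid.exists_irreducible_factor hu h0
  obtain ⟨q, hq, hpq⟩ := hF p hp.prime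
  have hpP : p ∣ P := hpq.dvd.trans
    (Finset.dvd_prod_of_mem _ (Finset.mem_filter.2 ⟨hq, hpq.prime hp.prime⟩))
  exact hp.not_isUnit (isUnit_of_dvd_one ((dvd_add_left (hpP.mul_left x)).1 hd))
end

section
/- Let R be an infinite principal ideal domain with fraction field K, let P ∈ K[X] be a nonconstant totally primitive polynomial, and let E ⊆ R ∖ {0} be a finite set. Then there are infinitely many m ∈ R such that P(m) is coprime in R to every element of E; moreover these m can be chosen so that the corresponding values P(m) are pairwise distinct and pairwise coprime. -/
open Polynomial

section aux
open UniqueFactorizationMonoid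

/-- A common denominator `d` controls the congruences satisfied by the values. -/
lemma aux_denom {R K : Type*} [CommRing R] [IsDomain R]
    [Field K] [Algebra R K] [IsFractionRing R K]
    (P : K[X]) (v : R → R)
    (hval : ∀ m, algebraMap R K (v m) = P.eval (algebraMap R K m)) :
    ∃ d : R, d ≠ 0 ∧ ∀ x y, x - y ∣ d * (v x - v y) := by
  obtain ⟨b, hb⟩ := IsLocalization.integerNormalization_map_to_map (nonZeroDivisors R) P
  set Q := IsLocalization.integerNormalization (nonZeroDivisors R) P with hQ
  have key : ∀ x, Q.eval x = (b : R) * v x := by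
    intro x
    apply IsFractionRing.injective R K
    rw [map_mul, hval, ← eval_map_apply, hb, Algebra.smul_def, Polynomial.algebraMap_apply,
      eval_mul, eval_C]
  refine ⟨b, nonZeroDivisors.ne_zero b.2, fun x y => ?_⟩
  have := sub_dvd_eval_sub x y Q
  rwa [key, key, ← mul_sub] at this

lemma aux_local {R : Type*} [CommRing R] [IsDomain R] [IsPrincipalIdealRing R]
    (v : R → R) (d : R) (hd : d ≠ 0) (hdv : ∀ x y, x - y ∣ d * (v x - v y))
    (p : R) (hp : Prime p) : ∃ k : ℕ, ∀ x y, p ^ k ∣ x - y → p ∣ v x - v y := by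
  obtain ⟨c, hc, hpc⟩ :=
    (FiniteMultiplicity.of_not_isUnit hp.not_unit hd).exists_eq_pow_mul_and_not_dvd
  refine ⟨multiplicity p d + 1, fun x y h => ?_⟩
  have h2 := h.trans (hdv x y)
  rw [hc, pow_succ, mul_assoc] at h2
  have h3 : p ∣ c * (v x - v y) := by
    rw [← hc] at h2
    exact (mul_dvd_mul_iff_left (pow_ne_zero _ hp.ne_zero)).1 h2
  exact (hp.dvd_or_dvd h3).resolve_left hpc

lemma aux_infinite {R : Type*} [CommRing R] [IsDomain R] [IsPrincipalIdealRing R] [Infinite R]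
    (v : R → R) (d : R) (hd : d ≠ 0) (hdv : ∀ x y, x - y ∣ d * (v x - v y))
    (htp : ∀ p : R, Prime p → ∃ m : R, ¬ p ∣ v m) (a : R) (ha : a ≠ 0) :
    {m : R | IsCoprime (v m) a}.Infinite := by
  classical
  letI : StrongNormalizationMonoid R := UniqueFactorizationMonoid.strongNormalizationMonoid
  let s : Finset R := (normalizedFactors a).toFinset
  have hs : ∀ p ∈ s, Prime p := fun p hp =>
    prime_of_normalized_factor p (Multiset.mem_toFinset.1 hp)
  have hk : ∀ p : R, ∃ k : ℕ, Prime p → ∀ x y, p ^ k ∣ x - y → p ∣ v x - v y := by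
    intro p
    by_cases hp : Prime p
    · obtain ⟨k, hk⟩ := aux_local v d hd hdv p hp
      exact ⟨k, fun _ => hk⟩
    · exact ⟨0, fun h => absurd h hp⟩
  choose k hk using hk
  have hm : ∀ p : R, ∃ m : R, Prime p → ¬ p ∣ v m := by
    intro p
    by_cases hp : Prime p
    · obtain ⟨m, hm⟩ := htp p hp
      exact ⟨m, fun _ => hm⟩
    · exact ⟨0, fun h => absurd h hp⟩
  choose μ hμ using hm
  obtain ⟨y, hy⟩ := IsDedekindDomain.exists_forall_sub_mem_ideal (s := s)
    (fun p : R => Ideal.span {p}) k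
    (fun p hp => Ideal.prime_of_isPrime (by simpa using (hs p hp).ne_zero)
      ((Ideal.span_singleton_prime (hs p hp).ne_zero).2 (hs p hp)))
    (fun p hp q hq hne h => hne (by
      rw [Ideal.span_singleton_eq_span_singleton] at h
      exact mem_normalizedFactors_eq_of_associated (Multiset.mem_toFinset.1 hp)
        (Multiset.mem_toFinset.1 hq) h))
    (fun p => μ p)
  let N : R := ∏ p ∈ s, p ^ k p
  have hN : N ≠ 0 := Finset.prod_ne_zero_iff.2 fun p hp => pow_ne_zero _ (hs p hp).ne_zero
  have hinj : Function.Injective (fun t : R => y + N * t) := fun t u h =>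
    mul_left_cancel₀ hN (add_left_cancel h)
  refine (Set.infinite_range_of_injective hinj).mono ?_
  rintro _ ⟨t, rfl⟩
  refine isCoprime_of_prime_dvd (fun h => ha h.2) fun z hz hzv hza => ?_
  obtain ⟨p, hpa, hzp⟩ := exists_mem_normalizedFactors_of_dvd ha hz.irreducible hza
  have hps : p ∈ s := Multiset.mem_toFinset.2 hpa
  have hpp := hs p hps
  have h1 : p ^ k p ∣ y - μ p := by
    have := hy p hps
    rwa [Ideal.span_singleton_pow, Ideal.mem_span_singleton] at this
  have h2 : p ^ k p ∣ N := Finset.dvd_prod_of_mem (fun p => p ^ k p) hps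
  have h3 : p ^ k p ∣ (y + N * t) - μ p := by
    have := dvd_add h1 (h2.mul_right t)
    convert this using 1
    ring
  have h4 := hk p hpp _ _ h3
  exact hμ p hpp ((dvd_sub_right (hzp.dvd_iff_dvd_left.1 hzv)).1 h4)

lemma aux_fiber {R K : Type*} [CommRing R] [IsDomain R]
    [Field K] [Algebra R K] [IsFractionRing R K]
    (P : K[X]) (v : R → R)
    (hval : ∀ m, algebraMap R K (v m) = P.eval (algebraMap R K m))
    (hnc : 0 < P.natDegree) (c : R) : {m : R | v m = c}.Finite := by
  have hne : P - C (algebraMap R K c) ≠ 0 := by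
    intro h
    rw [sub_eq_zero.1 h, natDegree_C] at hnc
    exact lt_irrefl _ hnc
  refine ((finite_setOf_isRoot hne).preimage (IsFractionRing.injective R K).injOn).subset ?_
  intro m hm
  have hm' : v m = c := hm
  simp [IsRoot, ← hval, hm']

end aux

/-- If `P ∈ K[X]` is a nonconstant totally primitive polynomial (with
integral values witnessed by `v : R → R`) and `E ⊆ R \ {0}` is finite, then there are
infinitely many `m` such that `P(m)` is coprime to every element of `E`; moreover these `m`
can be chosen so that the values `P(m)` are pairwise distinct and pairwise coprime. -/
theorem stmt5 {R K : Type*} [CommRing R] [IsDomain R] [IsPrincipalIdealRing R]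
    [Infinite R] [Field K] [Algebra R K] [IsFractionRing R K]
    (P : K[X]) (v : R → R)
    (hval : ∀ m, algebraMap R K (v m) = P.eval (algebraMap R K m))
    (hnc : 0 < P.natDegree)
    (htp : ∀ p : R, Prime p → ∃ m : R, ¬ p ∣ v m)
    (E : Finset R) (hE : (0 : R) ∉ E) :
    ∃ S : Set R, S.Infinite ∧
      (∀ m ∈ S, ∀ e ∈ E, IsCoprime (v m) e) ∧
      (∀ m₁ ∈ S, ∀ m₂ ∈ S, m₁ ≠ m₂ → v m₁ ≠ v m₂ ∧ IsCoprime (v m₁) (v m₂)) := by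
  classical
  obtain ⟨d, hd, hdv⟩ := aux_denom P v hval
  haveI : Std.Symm (fun x y : R => v x ≠ v y ∧ IsCoprime (v x) (v y)) :=
    ⟨fun _ _ h => ⟨h.1.symm, h.2.symm⟩⟩
  obtain ⟨f, hf, hr⟩ := exists_seq_of_forall_finset_exists'
    (fun m : R => v m ≠ 0 ∧ ∀ e ∈ E, IsCoprime (v m) e)
    (fun x y : R => v x ≠ v y ∧ IsCoprime (v x) (v y)) (by
      intro s hs
      have ha : (∏ e ∈ E, e) * ∏ x ∈ s, v x ≠ 0 :=
        mul_ne_zero (Finset.prod_ne_zero_iff.2 fun e he h => hE (h ▸ he))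
          (Finset.prod_ne_zero_iff.2 fun x hx => (hs x hx).1)
      have hfin : (⋃ c ∈ insert 0 (s.image v), {m : R | v m = c}).Finite :=
        Set.Finite.biUnion (Finset.finite_toSet _) fun c _ => aux_fiber P v hval hnc c
      obtain ⟨m, hm, hm2⟩ :=
        ((aux_infinite v d hd hdv htp _ ha).diff hfin).nonempty
      have hm : IsCoprime (v m) _ := hm
      have hm2 : v m ≠ 0 ∧ ∀ x ∈ s, v m ≠ v x := by simpa using hm2
      refine ⟨m, ⟨hm2.1, fun e he => ?_⟩, fun x hx => ⟨(hm2.2 x hx).symm, ?_⟩⟩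
      · exact hm.of_isCoprime_of_dvd_right
          ((Finset.dvd_prod_of_mem (fun e => e) he).mul_right _)
      · exact (hm.of_isCoprime_of_dvd_right
          ((Finset.dvd_prod_of_mem v hx).mul_left _)).symm)
  have hinj : Function.Injective f := by
    intro i j h
    by_contra hne
    exact (hr hne).1 (by rw [h])
  refine ⟨Set.range f, Set.infinite_range_of_injective hinj, ?_, ?_⟩
  · rintro _ ⟨i, rfl⟩
    exact (hf i).2
  · rintro _ ⟨i, rfl⟩ _ ⟨j, rfl⟩ hne
    exact hr (fun h => hne (by rw [h]))
end

section
/- Let R be an infinite principal ideal domain with fraction field K, and let P ∈ K[X] be a nonconstant totally primitive polynomial. Suppose P = P_0^α · Q, where P_0 ∈ K[X] is a nonconstant totally primitive polynomial irreducible in K[X], α ≥ 1, Q ∈ K[X], and Q is coprime to P_0 in K[X]. Then there exists an infinite subset S ⊆ R such that for all m, m_1, m_2 ∈ S with m_1 ≠ m_2: (i) P_0(m_1) ≠ P_0(m_2) and P_0(m_1) is coprime to P_0(m_2) in R; (ii) Q(m) ∈ R; (iii) P_0(m) is coprime to Q(m) in R; and (iv) if P_0 is separable, then either P_0(m) is a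 unit of R, or there is a prime element p of R with p ∣ P_0(m) and p² ∤ P_0(m), and if furthermore the group of units of R is finite, S can be chosen so that P_0(m) is never a unit. -/
open Polynomial

section helpers
variable {R : Type*} [CommRing R] [IsDomain R]

lemma aux_finite (p : R[X]) (hp : 0 < p.natDegree) (d : R) (v : R → R)
    (hv : ∀ m, p.eval m = d * v m) (F : Set R) (hF : F.Finite) : {m | v m ∈ F}.Finite := by
  have : {m | v m ∈ F} = ⋃ x ∈ F, {m | v m = x} := by ext; simp
  rw [this]
  refine hF.biUnion fun x _ => ?_
  have hne : p - C (d * x) ≠ 0 := by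
    intro h
    rw [sub_eq_zero] at h
    rw [h, natDegree_C] at hp
    exact lt_irrefl _ hp
  refine (Polynomial.finite_setOf_isRoot hne).subset fun m hm => ?_
  simp only [Set.mem_setOf_eq] at hm
  simp [IsRoot, hv, hm]

lemma aux_avoid [Infinite R] (p : R[X]) (hp : 0 < p.natDegree) (d : R) (v : R → R)
    (hv : ∀ m, p.eval m = d * v m) (F : Set R) (hF : F.Finite) (a n : R) (hn : n ≠ 0) :
    ∃ t, v (a + n * t) ∉ F := by
  by_contra! h
  have hinj : Function.Injective (fun t : R => a + n * t) := by
    intro x y hxy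
    simpa [hn] using hxy
  refine (Set.infinite_range_of_injective hinj) ((aux_finite p hp d v hv F hF).subset ?_)
  rintro _ ⟨t, rfl⟩
  exact h t

lemma aux_cong (p : R[X]) (d : R) (hd : d ≠ 0) (v : R → R)
    (hv : ∀ m, p.eval m = d * v m) (a c t : R) : c ∣ v (a + d * c * t) - v a := by
  have h := Polynomial.sub_dvd_eval_sub (a + d * c * t) a p
  rw [hv, hv, ← mul_sub, add_sub_cancel_left, mul_assoc d c t] at h
  rw [mul_assoc d c t]
  exact (dvd_mul_right c t).trans ((mul_dvd_mul_iff_left hd).1 h)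

lemma aux_coprime (p : R[X]) (d : R) (hd : d ≠ 0) (v : R → R)
    (hv : ∀ m, p.eval m = d * v m) (a c t : R) (h : IsCoprime (v a) c) :
    IsCoprime (v (a + d * c * t)) c := by
  obtain ⟨k, hk⟩ := aux_cong p d hd v hv a c t
  rw [sub_eq_iff_eq_add] at hk
  rw [hk]
  simpa [add_comm] using h.add_mul_left_left k

lemma aux_exists [IsPrincipalIdealRing R] (p : R[X]) (d : R) (hd : d ≠ 0) (v : R → R)
    (hv : ∀ m, p.eval m = d * v m) (htp : ∀ q : R, Prime q → ∃ m : R, ¬ q ∣ v m)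
    (c : R) (hc : c ≠ 0) : ∃ a, IsCoprime (v a) c := by
  classical
  let _ : StrongNormalizationMonoid R := UniqueFactorizationMonoid.strongNormalizationMonoid
  choose! w hw using htp
  let s := (UniqueFactorizationMonoid.normalizedFactors c).toFinset
  have hs : ∀ q ∈ s, Prime q := fun q hq =>
    UniqueFactorizationMonoid.prime_of_normalized_factor q (Multiset.mem_toFinset.1 hq)
  obtain ⟨y, hy⟩ := IsDedekindDomain.exists_forall_sub_mem_ideal (s := s)
    (fun q => Ideal.span {q}) (fun q => multiplicity q d + 1)
    (fun q hq => by
      rw [Ideal.prime_iff_isPrime (by simpa using (hs q hq).ne_zero)]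
      exact (Ideal.span_singleton_prime (hs q hq).ne_zero).2 (hs q hq))
    (fun q hq r hr hqr h => by
      rw [Ideal.span_singleton_eq_span_singleton] at h
      apply hqr
      have h1 := UniqueFactorizationMonoid.normalize_normalized_factor q
        (Multiset.mem_toFinset.1 hq)
      have h2 := UniqueFactorizationMonoid.normalize_normalized_factor r
        (Multiset.mem_toFinset.1 hr)
      rw [← h1, ← h2]
      exact normalize_eq_normalize h.dvd h.symm.dvd)
    (fun q => w q)
  refine ⟨y, ?_⟩
  refine isCoprime_of_prime_dvd (by simp [hc]) ?_
  intro q hq hqv hqc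
  obtain ⟨r, hr, hqr⟩ := UniqueFactorizationMonoid.exists_mem_normalizedFactors_of_dvd hc
    hq.irreducible hqc
  have hrs : r ∈ s := Multiset.mem_toFinset.2 hr
  have hrp := hs r hrs
  have hrv : r ∣ v y := hqr.symm.dvd.trans hqv
  have h := hy r hrs
  rw [Ideal.span_singleton_pow, Ideal.mem_span_singleton] at h
  have h2 := h.trans (Polynomial.sub_dvd_eval_sub y (w r) p)
  rw [hv, hv, ← mul_sub] at h2
  have hfin : FiniteMultiplicity r d := FiniteMultiplicity.of_prime_left hrp hd
  obtain ⟨e, he, hre⟩ := hfin.exists_eq_pow_mul_and_not_dvd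
  have h3 : r ^ multiplicity r d * r ∣ r ^ multiplicity r d * (e * (v y - v (w r))) := by
    rw [← pow_succ, ← mul_assoc, ← he]; exact h2
  have h4 := (mul_dvd_mul_iff_left (pow_ne_zero _ hrp.ne_zero)).1 h3
  rcases hrp.dvd_or_dvd h4 with h5 | h5
  · exact hre h5
  · exact hw r hrp ((dvd_sub_right hrv).1 h5)

lemma aux_step [IsPrincipalIdealRing R] [Infinite R] (p : R[X]) (hp : 0 < p.natDegree)
    (d : R) (hd : d ≠ 0) (v : R → R)
    (hv : ∀ m, p.eval m = d * v m) (htp : ∀ q : R, Prime q → ∃ m : R, ¬ q ∣ v m)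
    (c : R) (hc : c ≠ 0) (F : Set R) (hF : F.Finite) (sep : Prop)
    (hsep : sep → ∃ (a b : R[X]) (e : R), e ≠ 0 ∧ a * p + b * derivative p = C e) :
    ∃ m, v m ∉ F ∧ v m ≠ 0 ∧ IsCoprime (v m) c ∧
      (sep → (IsUnit (v m) ∨ ∃ q : R, Prime q ∧ q ∣ v m ∧ ¬ q ^ 2 ∣ v m) ∧
        (Finite Rˣ → ¬ IsUnit (v m))) := by
  classical
  by_cases hs : sep
  swap
  · obtain ⟨a, ha⟩ := aux_exists p d hd v hv htp c hc
    obtain ⟨t, ht⟩ := aux_avoid p hp d v hv (insert 0 F) (hF.insert 0) a (d * c)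
      (mul_ne_zero hd hc)
    simp only [Set.mem_insert_iff, not_or] at ht
    exact ⟨_, ht.2, ht.1, aux_coprime p d hd v hv a c t ha, fun h => absurd h hs⟩
  obtain ⟨A, B, e, he, hAB⟩ := hsep hs
  have hc' : c * d * e ≠ 0 := mul_ne_zero (mul_ne_zero hc hd) he
  obtain ⟨a, ha⟩ := aux_exists p d hd v hv htp (c * d * e) hc'
  let G : Set R := if Finite Rˣ then {x | IsUnit x} else ∅
  have hG : G.Finite := by
    simp only [G]
    split_ifs with h
    · exact Set.finite_range (Units.val : Rˣ → R)
    · exact Set.finite_empty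
  have hG' : ∀ x, x ∉ G → (Finite Rˣ → ¬ IsUnit x) := by
    intro x hx hfin hu
    apply hx
    simp only [G, if_pos hfin]
    exact hu
  have hFG := (hF.union hG).insert 0
  obtain ⟨t, ht⟩ := aux_avoid p hp d v hv _ hFG a (d * (c * d * e)) (mul_ne_zero hd hc')
  have hcop := aux_coprime p d hd v hv a (c * d * e) t ha
  generalize a + d * (c * d * e) * t = m at ht hcop
  simp only [Set.mem_insert_iff, Set.mem_union, not_or] at ht
  obtain ⟨h0, hmF, hmG⟩ := ht
  by_cases hu : IsUnit (v m)
  · exact ⟨m, hmF, h0, hcop.of_mul_right_left.of_mul_right_left,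
      fun _ => ⟨Or.inl hu, hG' _ hmG⟩⟩
  obtain ⟨q, hqi, hqv⟩ := WfDvdMonoid.exists_irreducible_factor hu h0
  have hq := hqi.prime
  by_cases hq2 : q ^ 2 ∣ v m
  swap
  · exact ⟨m, hmF, h0, hcop.of_mul_right_left.of_mul_right_left,
      fun _ => ⟨Or.inr ⟨q, hq, hqv, hq2⟩, fun _ => hu⟩⟩
  set N := d * (c * d * e) with hN
  have hN0 : N ≠ 0 := mul_ne_zero hd hc'
  have hqc : ¬ q ∣ c * d * e := fun h => hq.not_unit (hcop.isUnit_of_dvd' hqv h)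
  have hqd : ¬ q ∣ d := fun h => hqc ((h.mul_left c).mul_right e)
  have hqe : ¬ q ∣ e := fun h => hqc (h.mul_left _)
  have hqN : ¬ q ∣ N := fun h => (hq.dvd_or_dvd h).elim hqd hqc
  obtain ⟨s, hs'⟩ := aux_avoid p hp d v hv _ hFG (m + q * N) (q ^ 2 * N)
    (mul_ne_zero (pow_ne_zero _ hq.ne_zero) hN0)
  have e1 : m + q * N + q ^ 2 * N * s = m + N * (q * (1 + q * s)) := by ring
  rw [e1] at hs'
  have hcop' := aux_coprime p d hd v hv m (c * d * e) (q * (1 + q * s)) hcop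
  rw [← hN] at hcop'
  simp only [Set.mem_insert_iff, Set.mem_union, not_or] at hs'
  have hb := (Polynomial.binomExpansion p m (N * (q * (1 + q * s)))).2
  set k := (Polynomial.binomExpansion p m (N * (q * (1 + q * s)))).1
  rw [hv, hv] at hb
  have hder : ¬ q ∣ p.derivative.eval m := by
    intro h
    apply hqe
    have h1 := congrArg (Polynomial.eval m) hAB
    simp only [eval_add, eval_mul, eval_C] at h1
    rw [← h1, hv]
    exact dvd_add ((hqv.mul_left _).mul_left _) (h.mul_left _)
  generalize m + N * (q * (1 + q * s)) = m' at *
  have hq1 : q ∣ v m' := by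
    have : q ∣ d * v m' := by
      rw [hb]
      exact dvd_add (dvd_add (hqv.mul_left _) ⟨p.derivative.eval m * (N * (1 + q * s)), by ring⟩)
        ⟨k * N * (N * (q * (1 + q * s)) * (1 + q * s)), by ring⟩
    exact (hq.dvd_or_dvd this).resolve_left hqd
  have hq2' : ¬ q ^ 2 ∣ v m' := by
    intro h
    have h1 : q ^ 2 ∣ q * (p.derivative.eval m * (N * (1 + q * s))) := by
      have : q * (p.derivative.eval m * (N * (1 + q * s))) =
          d * v m' - d * v m - q ^ 2 * (k * N ^ 2 * (1 + q * s) ^ 2) := by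
        rw [hb]; ring
      rw [this]
      exact dvd_sub (dvd_sub (h.mul_left _) (hq2.mul_left _)) (dvd_mul_right _ _)
    rw [sq, mul_dvd_mul_iff_left hq.ne_zero] at h1
    rcases hq.dvd_or_dvd h1 with h2 | h2
    · exact hder h2
    rcases hq.dvd_or_dvd h2 with h3 | h3
    · exact hqN h3
    · exact hq.not_unit (isUnit_of_dvd_one ((dvd_add_left (dvd_mul_right q s)).1 h3))
  exact ⟨m', hs'.2.1, hs'.1, hcop'.of_mul_right_left.of_mul_right_left,
      fun _ => ⟨Or.inr ⟨q, hq, hq1, hq2'⟩, fun _ hu' => hq.not_unit (isUnit_of_dvd_unit hq1 hu')⟩⟩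

variable {K : Type*} [Field K] [Algebra R K] [IsFractionRing R K]

variable (R) in
lemma aux_norm (F : K[X]) : ∃ (f : R[X]) (d : R), d ≠ 0 ∧
    f.map (algebraMap R K) = C (algebraMap R K d) * F := by
  obtain ⟨b, hb⟩ := IsLocalization.integerNormalization_map_to_map (nonZeroDivisors R) F
  refine ⟨_, b, nonZeroDivisors.ne_zero b.2, hb.trans ?_⟩
  rw [← Polynomial.smul_eq_C_mul, algebraMap_smul]

lemma aux_bezout (f g : R[X])
    (h : IsCoprime (f.map (algebraMap R K)) (g.map (algebraMap R K))) :
    ∃ (a b : R[X]) (e : R), e ≠ 0 ∧ a * f + b * g = C e := by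
  obtain ⟨A, B, hAB⟩ := h
  obtain ⟨a, d, hd, ha⟩ := aux_norm R A
  obtain ⟨b, d', hd', hb⟩ := aux_norm R B
  refine ⟨C d' * a, C d * b, d * d', mul_ne_zero hd hd', ?_⟩
  apply Polynomial.map_injective (algebraMap R K) (IsFractionRing.injective R K)
  simp only [Polynomial.map_add, Polynomial.map_mul, map_C, ha, hb, map_mul]
  linear_combination (C (algebraMap R K d) * C (algebraMap R K d')) * hAB

end helpers


/-- Manipulation of a totally primitive prime factor: `P` is a nonconstant
totally primitive polynomial, `P = P₀ ^ α * Q` where `P₀` is a nonconstant totally primitive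
polynomial irreducible in `K[X]`, `α ≥ 1`, and `Q` is coprime to `P₀` in `K[X]`.  Then there
is an infinite `S ⊆ R` such that: the values `P₀(m)` (`m ∈ S`) are pairwise distinct and
coprime; `Q(m) ∈ R` for `m ∈ S`; `P₀(m)` is coprime to `Q(m)` in `R`; and, if `P₀` is
separable, `P₀(m)` is a unit or is divisible by some prime `p` but not by `p²`, and if
furthermore `Rˣ` is finite then `P₀(m)` is never a unit. -/
theorem stmt6 {R K : Type*} [CommRing R] [IsDomain R] [IsPrincipalIdealRing R]
    [Infinite R] [Field K] [Algebra R K] [IsFractionRing R K]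
    (P P₀ Q : K[X]) (α : ℕ) (hα : 1 ≤ α)
    (vP v₀ : R → R)
    (hvP : ∀ m, algebraMap R K (vP m) = P.eval (algebraMap R K m))
    (hv₀ : ∀ m, algebraMap R K (v₀ m) = P₀.eval (algebraMap R K m))
    (hncP : 0 < P.natDegree) (hnc₀ : 0 < P₀.natDegree)
    (htpP : ∀ p : R, Prime p → ∃ m : R, ¬ p ∣ vP m)
    (htp₀ : ∀ p : R, Prime p → ∃ m : R, ¬ p ∣ v₀ m)
    (hirr : Irreducible P₀)
    (hfac : P = P₀ ^ α * Q)
    (hcop : IsCoprime Q P₀) :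
    ∃ S : Set R, S.Infinite ∧
      (∀ m₁ ∈ S, ∀ m₂ ∈ S, m₁ ≠ m₂ → v₀ m₁ ≠ v₀ m₂ ∧ IsCoprime (v₀ m₁) (v₀ m₂)) ∧
      (∀ m ∈ S, ∃ q : R, algebraMap R K q = Q.eval (algebraMap R K m) ∧
        IsCoprime (v₀ m) q) ∧
      (P₀.Separable →
        (∀ m ∈ S, IsUnit (v₀ m) ∨ ∃ p : R, Prime p ∧ p ∣ v₀ m ∧ ¬ p ^ 2 ∣ v₀ m) ∧
        (Finite Rˣ → ∀ m ∈ S, ¬ IsUnit (v₀ m))) := by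
  classical
  have inj := IsFractionRing.injective R K
  obtain ⟨p, d, hd, hpd⟩ := aux_norm R P₀
  obtain ⟨g, c, hc, hgc⟩ := aux_norm R Q
  have hdK : algebraMap R K d ≠ 0 := fun h => hd (inj (by simpa using h))
  have hcK : algebraMap R K c ≠ 0 := fun h => hc (inj (by simpa using h))
  have hdu : IsUnit (C (algebraMap R K d)) := isUnit_C.2 hdK.isUnit
  have hcu : IsUnit (C (algebraMap R K c)) := isUnit_C.2 hcK.isUnit
  have hp : 0 < p.natDegree := by
    rw [← Polynomial.natDegree_map_eq_of_injective inj, hpd, natDegree_C_mul hdK]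
    exact hnc₀
  have hv : ∀ m, p.eval m = d * v₀ m := by
    intro m
    apply inj
    rw [map_mul, hv₀, ← eval_map_apply, hpd, eval_mul, eval_C]
  have hg : ∀ m, algebraMap R K (g.eval m) =
      algebraMap R K c * Q.eval (algebraMap R K m) := by
    intro m
    rw [← eval_map_apply, hgc, eval_mul, eval_C]
  obtain ⟨a, b, e, he, hab⟩ := aux_bezout (K := K) g p (by
    rw [hgc, hpd]
    exact (isCoprime_mul_unit_left_left hcu _ _).2
      ((isCoprime_mul_unit_left_right hdu _ _).2 hcop))
  have hsep : P₀.Separable →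
      ∃ (a b : R[X]) (e : R), e ≠ 0 ∧ a * p + b * derivative p = C e := by
    intro h
    apply aux_bezout (K := K)
    have h2 : (p.map (algebraMap R K)).Separable := by
      rw [hpd]
      exact h.unit_mul hdu
    rw [← derivative_map]
    exact h2
  have hce : c * e ≠ 0 := mul_ne_zero hc he
  let Good : R → Prop := fun m => v₀ m ≠ 0 ∧ IsCoprime (v₀ m) (c * e) ∧
      (P₀.Separable → (IsUnit (v₀ m) ∨ ∃ q : R, Prime q ∧ q ∣ v₀ m ∧ ¬ q ^ 2 ∣ v₀ m) ∧
        (Finite Rˣ → ¬ IsUnit (v₀ m)))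
  let r : R → R → Prop := fun x y => v₀ x ≠ v₀ y ∧ IsCoprime (v₀ x) (v₀ y)
  have hsymm : Std.Symm r := ⟨fun x y h => ⟨h.1.symm, h.2.symm⟩⟩
  obtain ⟨f, hf, hfr⟩ := exists_seq_of_forall_finset_exists' Good r (by
    intro s hs
    obtain ⟨m, h1, h2, h3, h4⟩ := aux_step p hp d hd v₀ hv htp₀ ((c * e) * ∏ x ∈ s, v₀ x)
      (mul_ne_zero hce (Finset.prod_ne_zero_iff.2 fun x hx => (hs x hx).1))
      (v₀ '' s) (s.finite_toSet.image v₀) P₀.Separable hsep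
    refine ⟨m, ⟨h2, h3.of_mul_right_left, h4⟩, fun x hx => ⟨?_, ?_⟩⟩
    · intro h
      exact h1 ⟨x, hx, h⟩
    · exact (IsCoprime.prod_right_iff.1 h3.of_mul_right_right x hx).symm)
  have finj : Function.Injective f := by
    intro i j hij
    by_contra hne
    exact (hfr hne).1 (by rw [hij])
  refine ⟨Set.range f, Set.infinite_range_of_injective finj, ?_, ?_, ?_⟩
  · rintro _ ⟨i, rfl⟩ _ ⟨j, rfl⟩ hij
    exact hfr (fun h => hij (by rw [h]))
  · rintro _ ⟨i, rfl⟩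
    obtain ⟨-, h2, -⟩ := hf i
    generalize f i = m at h2
    have h3 : v₀ m ^ α * g.eval m = c * vP m := by
      apply inj
      rw [map_mul, map_mul, map_pow, hg, hvP, hv₀, hfac, eval_mul, eval_pow]
      ring
    have h4 : c ∣ g.eval m :=
      (h2.of_mul_right_left.symm.pow_right (n := α)).dvd_of_dvd_mul_left ⟨_, h3⟩
    obtain ⟨q, hq⟩ := h4
    refine ⟨q, ?_, ?_⟩
    · have := hg m
      rw [hq, map_mul] at this
      exact mul_left_cancel₀ hcK this
    · have h5 := congrArg (Polynomial.eval m) hab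
      simp only [eval_add, eval_mul, eval_C, hq, hv] at h5
      obtain ⟨x, y, hxy⟩ := h2.of_mul_right_right
      refine ⟨x + y * (b.eval m * d), y * (a.eval m * c), ?_⟩
      linear_combination hxy + y * h5
  · intro h
    refine ⟨?_, ?_⟩
    · rintro _ ⟨i, rfl⟩
      exact ((hf i).2.2 h).1
    · rintro hfin _ ⟨i, rfl⟩
      exact ((hf i).2.2 h).2 hfin
end

section
/- Let R be an infinite principal ideal domain with fraction field K, and let P_1, …, P_n ∈ K[X] be totally primitive polynomials. Suppose there exists an infinite subset T ⊆ R such that for every i and all m_1, m_2 ∈ T with m_1 ≠ m_2, P_i(m_1) is coprime to P_i(m_2) in R. Then the product P = P_1⋯P_n is totally primitive. Moreover, there exists an infinite subset S ⊆ T such that for all m, m_1, m_2 ∈ S with m_1 ≠ m_2: P(m_1) is coprime to P(m_2) in R, and for all distinct i, j such that P_i and P_j are coprime in K[X], P_i(m) is coprime to P_j(m) in R. -/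
open Polynomial

theorem finite_bad {R : Type*} [CommRing R] [IsDomain R] [IsPrincipalIdealRing R]
    (w : R → R) (T : Set R)
    (h : ∀ m₁ ∈ T, ∀ m₂ ∈ T, m₁ ≠ m₂ → IsCoprime (w m₁) (w m₂)) (r : R) (hr : r ≠ 0) :
    {m | m ∈ T ∧ ¬ IsCoprime r (w m)}.Finite := by
  classical
  have hsub : ∀ p : R, Prime p → {m | m ∈ T ∧ p ∣ w m}.Finite := by
    intro p hp
    apply Set.Subsingleton.finite
    rintro a ⟨ha, ha'⟩ b ⟨hb, hb'⟩
    by_contra hab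
    exact hp.not_isUnit ((h a ha b hb hab).isUnit_of_dvd' ha' hb')
  have hfin : (⋃ q ∈ (UniqueFactorizationMonoid.factors r).toFinset,
      {m | m ∈ T ∧ q ∣ w m}).Finite := by
    apply Set.Finite.biUnion (Finset.finite_toSet _)
    intro q hq
    exact hsub q (UniqueFactorizationMonoid.prime_of_factor q (by simpa using hq))
  refine hfin.subset ?_
  rintro m ⟨hm, hc⟩
  by_contra hcon
  apply hc
  apply isCoprime_of_prime_dvd (fun h => hr h.1)
  intro p hp hpr hpw
  obtain ⟨q, hq, hpq⟩ :=
    UniqueFactorizationMonoid.exists_mem_factors_of_dvd hr hp.irreducible hpr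
  apply hcon
  simp only [Set.mem_iUnion]
  exact ⟨q, by simpa using hq, hm, hpq.symm.dvd.trans hpw⟩

theorem exists_resultant {R K : Type*} [CommRing R] [IsDomain R]
    [Field K] [Algebra R K] [IsFractionRing R K] (P Q : K[X]) (v w : R → R)
    (hv : ∀ m, algebraMap R K (v m) = P.eval (algebraMap R K m))
    (hw : ∀ m, algebraMap R K (w m) = Q.eval (algebraMap R K m))
    (h : IsCoprime P Q) : ∃ d : R, d ≠ 0 ∧ ∀ m, ∃ x y, x * v m + y * w m = d := by
  obtain ⟨a, b, hab⟩ := h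
  obtain ⟨c, hc0, hc⟩ := IsLocalization.integerNormalization_spec (nonZeroDivisors R) a
  obtain ⟨e, he0, he⟩ := IsLocalization.integerNormalization_spec (nonZeroDivisors R) b
  set A := IsLocalization.integerNormalization (nonZeroDivisors R) a
  set B := IsLocalization.integerNormalization (nonZeroDivisors R) b
  refine ⟨c * e, mul_ne_zero (nonZeroDivisors.ne_zero hc0) (nonZeroDivisors.ne_zero he0), ?_⟩
  intro m
  refine ⟨e * A.eval m, c * B.eval m, ?_⟩
  apply IsFractionRing.injective R K
  have h1 := congrArg (Polynomial.eval (algebraMap R K m)) hc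
  have h2 := congrArg (Polynomial.eval (algebraMap R K m)) he
  have h3 := congrArg (Polynomial.eval (algebraMap R K m)) hab
  simp only [eval_map_algebraMap, aeval_algebraMap_apply, coe_aeval_eq_eval, eval_add, eval_mul,
    eval_one, Algebra.smul_def, Polynomial.algebraMap_apply, eval_C] at h1 h2 h3
  simp only [map_add, map_mul, hv, hw, h1, h2]
  linear_combination (algebraMap R K c * algebraMap R K e) * h3


/-- A partial converse to the main theorem: if `P_1, …, P_n ∈ K[X]` are
totally primitive (values witnessed by `v i : R → R`) and there is an infinite `T ⊆ R` on
which, for each `i`, the values of `P i` are pairwise coprime, then the product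
`P = ∏ i, P i` is totally primitive, and there is an infinite `S ⊆ T` on which the values of
`P` are pairwise coprime, and `P i (m)` is coprime to `P j (m)` whenever `i ≠ j` and
`P i`, `P j` are coprime in `K[X]`. -/
theorem stmt8 {R K : Type*} [CommRing R] [IsDomain R] [IsPrincipalIdealRing R]
    [Infinite R] [Field K] [Algebra R K] [IsFractionRing R K]
    (n : ℕ) (Pl : Fin n → K[X]) (v : Fin n → R → R)
    (hval : ∀ i m, algebraMap R K (v i m) = (Pl i).eval (algebraMap R K m))
    (htp : ∀ i, ∀ p : R, Prime p → ∃ m : R, ¬ p ∣ v i m)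
    (T : Set R) (hT : T.Infinite)
    (hTcop : ∀ i, ∀ m₁ ∈ T, ∀ m₂ ∈ T, m₁ ≠ m₂ → IsCoprime (v i m₁) (v i m₂)) :
    (∀ p : R, Prime p → ∃ m : R, ¬ p ∣ ∏ i, v i m) ∧
    ∃ S : Set R, S ⊆ T ∧ S.Infinite ∧
      (∀ m₁ ∈ S, ∀ m₂ ∈ S, m₁ ≠ m₂ → IsCoprime (∏ i, v i m₁) (∏ i, v i m₂)) ∧
      (∀ m ∈ S, ∀ i j : Fin n, i ≠ j → IsCoprime (Pl i) (Pl j) →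
        IsCoprime (v i m) (v j m)) := by
  classical
  have key : ∀ r : R, r ≠ 0 → {m | m ∈ T ∧ ∃ i, ¬ IsCoprime r (v i m)}.Finite := by
    intro r hr
    have : (⋃ i, {m | m ∈ T ∧ ¬ IsCoprime r (v i m)}).Finite :=
      Set.finite_iUnion fun i => finite_bad (v i) T (hTcop i) r hr
    refine this.subset ?_
    rintro m ⟨hm, i, hi⟩
    exact Set.mem_iUnion.2 ⟨i, hm, hi⟩
  refine ⟨?_, ?_⟩
  · intro p hp
    obtain ⟨m, hm, hm'⟩ := (hT.sdiff (key p hp.ne_zero)).nonempty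
    refine ⟨m, fun hdvd => ?_⟩
    obtain ⟨i, -, hi⟩ := (Prime.dvd_finsetProd_iff hp _).1 hdvd
    exact hm' ⟨hm, i, fun hc => hp.not_isUnit (hc.isUnit_of_dvd' dvd_rfl hi)⟩
  have hzero : {m | m ∈ T ∧ ∃ i, v i m = 0}.Finite := by
    have h1 : (⋃ i, {m | m ∈ T ∧ v i m = 0}).Finite := by
      refine Set.finite_iUnion fun i => ?_
      apply Set.Subsingleton.finite
      rintro a ⟨ha, ha'⟩ b ⟨hb, hb'⟩
      by_contra hab
      have := hTcop i a ha b hb hab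
      rw [ha', hb'] at this
      exact not_isCoprime_zero_zero this
    refine h1.subset ?_
    rintro m ⟨hm, i, hi⟩
    exact Set.mem_iUnion.2 ⟨i, hm, hi⟩
  have hpair : {m | m ∈ T ∧ ∃ i j, IsCoprime (Pl i) (Pl j) ∧
      ¬ IsCoprime (v i m) (v j m)}.Finite := by
    have h1 : (⋃ i, ⋃ j, {m | m ∈ T ∧ IsCoprime (Pl i) (Pl j) ∧
        ¬ IsCoprime (v i m) (v j m)}).Finite := by
      refine Set.finite_iUnion fun i => Set.finite_iUnion fun j => ?_
      by_cases hij : IsCoprime (Pl i) (Pl j)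
      · obtain ⟨d, hd, hd'⟩ := exists_resultant (Pl i) (Pl j) (v i) (v j) (hval i) (hval j) hij
        refine (key d hd).subset ?_
        rintro m ⟨hm, -, hn⟩
        refine ⟨hm, i, fun hc => hn ?_⟩
        obtain ⟨x, y, hxy⟩ := hd' m
        obtain ⟨s, t, hst⟩ := hc
        refine ⟨s * x + t, s * y, ?_⟩
        linear_combination hst + s * hxy
      · simp [hij]
    refine h1.subset ?_
    rintro m ⟨hm, i, j, hi⟩
    exact Set.mem_iUnion.2 ⟨i, Set.mem_iUnion.2 ⟨j, hm, hi⟩⟩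
  have hT' := (hT.sdiff hzero).sdiff hpair
  set T' := (T \ {m | m ∈ T ∧ ∃ i, v i m = 0}) \ {m | m ∈ T ∧ ∃ i j, IsCoprime (Pl i) (Pl j) ∧
      ¬ IsCoprime (v i m) (v j m)} with hT'def
  let r : R → R → Prop := fun x y => x ≠ y ∧ IsCoprime (∏ i, v i x) (∏ i, v i y)
  have : Std.Symm r := ⟨fun x y h => ⟨h.1.symm, h.2.symm⟩⟩
  obtain ⟨f, hf, hfr⟩ := exists_seq_of_forall_finset_exists' (fun m => m ∈ T') r (by
    intro s hs
    have hne : ∏ x ∈ s, ∏ i, v i x ≠ 0 := by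
      refine Finset.prod_ne_zero_iff.2 fun x hx => Finset.prod_ne_zero_iff.2 fun i _ h0 => ?_
      exact (hs x hx).1.2 ⟨(hs x hx).1.1, i, h0⟩
    obtain ⟨y, hy, hy'⟩ := ((hT'.sdiff (key _ hne)).sdiff s.finite_toSet).nonempty
    refine ⟨y, hy.1, fun x hx => ⟨fun h => hy' (by simpa [← h] using hx), ?_⟩⟩
    refine IsCoprime.prod_right fun i _ => ?_
    by_contra hc
    refine hy.2 ⟨hy.1.1.1, i, fun h => hc ?_⟩
    exact h.of_isCoprime_of_dvd_left (Finset.dvd_prod_of_mem (fun x => ∏ i, v i x) hx))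
  have hinj : Function.Injective f := by
    intro a b hab
    by_contra h
    exact (hfr h).1 hab
  refine ⟨Set.range f, ?_, Set.infinite_range_of_injective hinj, ?_, ?_⟩
  · rintro _ ⟨k, rfl⟩
    exact (hf k).1.1
  · rintro _ ⟨k, rfl⟩ _ ⟨l, rfl⟩ hkl
    exact (hfr (fun h : k = l => hkl (by rw [h]))).2
  · rintro _ ⟨k, rfl⟩ i j - hij
    by_contra hc
    exact (hf k).2 ⟨(hf k).1.1, i, j, hij, hc⟩
end

section
/- Let R be an infinite principal ideal domain with fraction field K, let P ∈ K[X] be an integrally valued polynomial, and let p be a prime element of R. Then there exists ν ∈ ℕ, ν ≥ 1, such that for all a, b ∈ R: if p^ν divides a − b in R, then p divides P(a) − P(b) in R. -/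
open Polynomial

/-- If `P ∈ K[X]` is integrally valued (values witnessed by `v : R → R`)
and `p` is a prime element of `R`, then there is `ν ≥ 1` such that `a ≡ b (mod p^ν)` implies
`P(a) ≡ P(b) (mod p)`. -/
theorem stmt9 {R K : Type*} [CommRing R] [IsDomain R] [IsPrincipalIdealRing R]
    [Infinite R] [Field K] [Algebra R K] [IsFractionRing R K]
    (P : K[X]) (v : R → R)
    (hval : ∀ m, algebraMap R K (v m) = P.eval (algebraMap R K m))
    (p : R) (hp : Prime p) :
    ∃ ν : ℕ, 1 ≤ ν ∧ ∀ a b : R, p ^ ν ∣ a - b → p ∣ v a - v b := by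
  obtain ⟨d, hd⟩ := IsLocalization.integerNormalization_map_to_map (nonZeroDivisors R) P
  set Q := IsLocalization.integerNormalization (nonZeroDivisors R) P with hQ
  have hd0 : (d : R) ≠ 0 := nonZeroDivisors.ne_zero d.2
  obtain ⟨k, e, he, hde⟩ := WfDvdMonoid.max_power_factor hd0 hp.irreducible
  have key : ∀ m, Q.eval m = d * v m := by
    intro m
    apply IsFractionRing.injective R K
    have h := congrArg (fun q => q.eval (algebraMap R K m)) hd
    simp only [eval_map_algebraMap, aeval_algebraMap_apply_eq_algebraMap_eval] at h
    rw [h, map_mul, hval, eval_smul, Algebra.smul_def]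
  refine ⟨k + 1, by omega, fun a b hab => ?_⟩
  have h := hab.trans (Polynomial.sub_dvd_eval_sub a b Q)
  rw [key, key, ← mul_sub, hde, pow_succ, mul_assoc,
    mul_dvd_mul_iff_left (pow_ne_zero k hp.ne_zero)] at h
  exact (hp.dvd_or_dvd h).resolve_left he
end

section
/- Let R be an infinite principal ideal domain with fraction field K. Every nonzero polynomial Q ∈ K[X] can be written in the form Q(X) = (A/B)·P(X), where A, B ∈ R are nonzero and coprime and P ∈ K[X] is totally primitive; moreover A, B and P are uniquely determined up to multiplication by units of R. If in addition Q is integrally valued, then B is a unit of R. -/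
open Polynomial

theorem tp_dvd {R : Type*} [CommRing R] [IsDomain R] [IsPrincipalIdealRing R]
    (v : R → R) (hv : ∀ p : R, Prime p → ∃ m : R, ¬ p ∣ v m) (h0 : ∃ m, v m ≠ 0)
    (d a : R) (h : ∀ m, d ∣ a * v m) : d ∣ a := by
  obtain ⟨g, hg⟩ := (IsPrincipalIdealRing.principal (Ideal.span (Set.range v))).principal
  have hgd : ∀ m, g ∣ v m := fun m => by
    have : v m ∈ Ideal.span (Set.range v) := Ideal.subset_span ⟨m, rfl⟩
    rw [hg] at this
    exact Ideal.mem_span_singleton.1 this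
  have hg0 : g ≠ 0 := by
    rintro rfl
    obtain ⟨m, hm⟩ := h0
    exact hm (zero_dvd_iff.1 (hgd m))
  have hu : IsUnit g := by
    by_contra hn
    obtain ⟨p, hp, hpg⟩ := WfDvdMonoid.exists_irreducible_factor hn hg0
    obtain ⟨m, hm⟩ := hv p hp.prime
    exact hm (hpg.trans (hgd m))
  have hgs : g ∈ Ideal.span (Set.range v) := by
    rw [hg]; exact Ideal.mem_span_singleton_self g
  have key : ∀ x ∈ Ideal.span (Set.range v), d ∣ a * x := by
    intro x hx
    induction hx using Submodule.span_induction with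
    | mem x hx => obtain ⟨m, rfl⟩ := hx; exact h m
    | zero => simp
    | add x y _ _ hx hy => rw [mul_add]; exact dvd_add hx hy
    | smul r x _ hx => rw [smul_eq_mul, mul_left_comm]; exact hx.mul_left r
  exact (hu.dvd_mul_right).1 (key g hgs)

theorem tp_nonzero {R K : Type*} [CommRing R] [IsDomain R]
    [Infinite R] [Field K] [Algebra R K] [IsFractionRing R K]
    (P : K[X]) (hP : P ≠ 0) (v : R → R)
    (hv : ∀ m, algebraMap R K (v m) = P.eval (algebraMap R K m)) : ∃ m, v m ≠ 0 := by
  by_contra! hc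
  apply hP
  apply Polynomial.eq_zero_of_infinite_isRoot
  refine (Set.infinite_range_of_injective (IsFractionRing.injective R K)).mono ?_
  rintro _ ⟨m, rfl⟩
  have := hv m
  rw [hc m, map_zero] at this
  exact this.symm

theorem tp_exists {R K : Type*} [CommRing R] [IsDomain R] [IsPrincipalIdealRing R]
    [Infinite R] [Field K] [Algebra R K] [IsFractionRing R K]
    (Q : K[X]) (hQ : Q ≠ 0) :
    ∃ (c : K) (P : K[X]) (v : R → R), c ≠ 0 ∧
      (∀ m, algebraMap R K (v m) = P.eval (algebraMap R K m)) ∧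
      (∀ p : R, Prime p → ∃ m : R, ¬ p ∣ v m) ∧ Q = C c * P := by
  have inj := IsFractionRing.injective R K
  obtain ⟨b, hb, hq⟩ := IsLocalization.integerNormalization_spec (nonZeroDivisors R) Q
  set q := IsLocalization.integerNormalization (nonZeroDivisors R) Q with hqdef
  have hb0 : algebraMap R K b ≠ 0 := by
    intro h
    exact nonZeroDivisors.ne_zero hb (inj (by rw [h, map_zero]))
  have hqe : q.map (algebraMap R K) = C (algebraMap R K b) * Q := by
    rw [hq, ← Polynomial.smul_eq_C_mul, algebraMap_smul]
  have hev : ∀ m : R, algebraMap R K (q.eval m) = (C (algebraMap R K b) * Q).eval (algebraMap R K m) := by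
    intro m
    rw [← hqe, Polynomial.eval_map_apply]
  obtain ⟨m0, hm0⟩ := tp_nonzero (R := R) _ (mul_ne_zero (C_ne_zero.2 hb0) hQ) _ hev
  obtain ⟨g, hg⟩ := (IsPrincipalIdealRing.principal
    (Ideal.span (Set.range fun m => q.eval m))).principal
  have hgd : ∀ m, g ∣ q.eval m := fun m => by
    have : q.eval m ∈ Ideal.span (Set.range fun m => q.eval m) := Ideal.subset_span ⟨m, rfl⟩
    rw [hg] at this
    exact Ideal.mem_span_singleton.1 this
  have hg0 : g ≠ 0 := by
    rintro rfl
    exact hm0 (zero_dvd_iff.1 (hgd m0))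
  have hg0' : algebraMap R K g ≠ 0 := fun h => hg0 (inj (by rw [h, map_zero]))
  choose v hv using hgd
  refine ⟨algebraMap R K g / algebraMap R K b,
    C (algebraMap R K b / algebraMap R K g) * Q, v, div_ne_zero hg0' hb0, ?_, ?_, ?_⟩
  · intro m
    have := hev m
    rw [hv m, map_mul, eval_mul, eval_C] at this
    rw [eval_mul, eval_C]
    field_simp
    linear_combination this
  · intro p hp
    by_contra! hc
    have : Ideal.span (Set.range fun m => q.eval m) ≤ Ideal.span {g * p} := by
      rw [Ideal.span_le]
      rintro _ ⟨m, rfl⟩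
      apply Ideal.mem_span_singleton.2
      change g * p ∣ q.eval m
      rw [hv m]
      exact mul_dvd_mul_left g (hc m)
    rw [hg] at this
    have h2 : g * p ∣ g * 1 := by
      rw [mul_one]
      exact Ideal.mem_span_singleton.1 (this (Ideal.mem_span_singleton_self g))
    exact hp.not_unit (isUnit_of_dvd_one ((mul_dvd_mul_iff_left hg0).1 h2))
  · rw [← mul_assoc, ← C_mul]
    have : algebraMap R K g / algebraMap R K b * (algebraMap R K b / algebraMap R K g) = 1 := by
      field_simp
    rw [this, C_1, one_mul]

/-- Every nonzero `Q ∈ K[X]` can be written `Q = (A/B)·P` with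
`A, B ∈ R` nonzero and coprime and `P` totally primitive (integral values witnessed by
`v : R → R`); `A`, `B`, `P` are unique up to units of `R`; and if `Q` is integrally valued
then `B` is a unit. -/
theorem stmt10 {R K : Type*} [CommRing R] [IsDomain R] [IsPrincipalIdealRing R]
    [Infinite R] [Field K] [Algebra R K] [IsFractionRing R K]
    (Q : K[X]) (hQ : Q ≠ 0) :
    ∃ (A B : R) (P : K[X]) (v : R → R),
      A ≠ 0 ∧ B ≠ 0 ∧ IsCoprime A B ∧
      (∀ m, algebraMap R K (v m) = P.eval (algebraMap R K m)) ∧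
      (∀ p : R, Prime p → ∃ m : R, ¬ p ∣ v m) ∧
      Q = Polynomial.C (algebraMap R K A / algebraMap R K B) * P ∧
      ((∀ m : R, ∃ r : R, algebraMap R K r = Q.eval (algebraMap R K m)) → IsUnit B) ∧
      (∀ (A' B' : R) (P' : K[X]) (v' : R → R),
        A' ≠ 0 → B' ≠ 0 → IsCoprime A' B' →
        (∀ m, algebraMap R K (v' m) = P'.eval (algebraMap R K m)) →
        (∀ p : R, Prime p → ∃ m : R, ¬ p ∣ v' m) →
        Q = Polynomial.C (algebraMap R K A' / algebraMap R K B') * P' →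
        Associated A A' ∧ Associated B B' ∧
          ∃ u : Rˣ, P' = Polynomial.C (algebraMap R K (u : R)) * P) := by
  have inj := IsFractionRing.injective R K
  have nz : ∀ a : R, a ≠ 0 → algebraMap R K a ≠ 0 :=
    fun a ha h => ha (inj (by rw [h, map_zero]))
  obtain ⟨c, P, v, hc, hv, hp, hQP⟩ := tp_exists (R := R) Q hQ
  obtain ⟨A, B, hAB, hcAB⟩ := IsFractionRing.exists_reduced_fraction (A := R) c
  have hB : (B : R) ≠ 0 := nonZeroDivisors.ne_zero B.2
  rw [IsFractionRing.mk'_eq_div] at hcAB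
  have hA : A ≠ 0 := by
    rintro rfl
    apply hc
    rw [← hcAB]; simp
  have hP : P ≠ 0 := by
    rintro rfl
    exact hQ (by rw [hQP, mul_zero])
  have hcop : IsCoprime A (B : R) := hAB.isCoprime
  have hvn := tp_nonzero P hP v hv
  refine ⟨A, B, P, v, hA, hB, hcop, hv, hp, by rw [hcAB]; exact hQP, ?_, ?_⟩
  · intro hint
    have : (B : R) ∣ A := by
      apply tp_dvd v hp hvn
      intro m
      obtain ⟨r, hr⟩ := hint m
      refine ⟨r, inj ?_⟩
      rw [map_mul, map_mul, hr, hv, hQP, ← hcAB, eval_mul, eval_C]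
      have := nz _ hB
      field_simp
    exact hcop.isUnit_of_dvd' this dvd_rfl
  · intro A' B' P' v' hA' hB' hcop' hv' hp' hQ'
    have hP' : P' ≠ 0 := by
      rintro rfl
      exact hQ (by rw [hQ', mul_zero])
    have hvn' := tp_nonzero P' hP' v' hv'
    have a1 := nz _ hA
    have a2 := nz _ hB
    have a3 := nz _ hA'
    have a4 := nz _ hB'
    have heq : ∀ m, (A * B') * v m = (A' * B) * v' m := by
      intro m
      apply inj
      have h : Q.eval (algebraMap R K m) = Q.eval (algebraMap R K m) := rfl
      conv_lhs at h => rw [hQP, ← hcAB]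
      conv_rhs at h => rw [hQ']
      simp only [eval_mul, eval_C, ← hv, ← hv'] at h
      field_simp at h
      simp only [map_mul]
      linear_combination h
    have d1 : A' * B ∣ A * B' := tp_dvd v hp hvn _ _ fun m => ⟨_, heq m⟩
    have d2 : A * B' ∣ A' * B := tp_dvd v' hp' hvn' _ _ fun m => ⟨_, (heq m).symm⟩
    refine ⟨associated_of_dvd_dvd ?_ ?_, associated_of_dvd_dvd ?_ ?_, ?_⟩
    · exact hcop.dvd_of_dvd_mul_right ((dvd_mul_right _ _).trans d2)
    · exact hcop'.dvd_of_dvd_mul_right ((dvd_mul_right _ _).trans d1)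
    · exact hcop.symm.dvd_of_dvd_mul_left ((dvd_mul_left _ _).trans d1)
    · exact hcop'.symm.dvd_of_dvd_mul_left ((dvd_mul_left _ _).trans d2)
    · obtain ⟨u, hu⟩ := associated_of_dvd_dvd d1 d2
      refine ⟨u, ?_⟩
      have hu' := congrArg (algebraMap R K) hu
      simp only [map_mul] at hu'
      have e : algebraMap R K A / algebraMap R K B
          = algebraMap R K A' / algebraMap R K B' * algebraMap R K (u : R) := by
        field_simp
        linear_combination -hu'
      have h3 := hQ'
      rw [hQP, ← hcAB, e, C_mul, mul_assoc] at h3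
      exact (mul_left_cancel₀ (C_ne_zero.2 (div_ne_zero a3 a4)) h3).symm
end

section
/- Let R be an infinite principal ideal domain with fraction field K. Every nonconstant totally primitive polynomial P ∈ K[X] can be written, uniquely up to units of R and up to the order of the factors, in the form P(X) = (1/Γ) · P_1(X)^{α_1} · P_2(X)^{α_2} ⋯ P_n(X)^{α_n}, where each α_i ≥ 1, Γ ∈ R is nonzero, the P_i are pairwise non-associate totally primitive polynomials that are irreducible in K[X], and Γ is a greatest common divisor of the value set {∏_i P_i(m)^{α_i} : m ∈ R}. -/
open Polynomial

lemma aux_ne {R K : Type*} [CommRing R] [IsDomain R]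
    [Infinite R] [Field K] [Algebra R K] [IsFractionRing R K] (Q : K[X]) (hQ : Q ≠ 0) :
    ∃ m : R, Q.eval (algebraMap R K m) ≠ 0 := by
  by_contra! h
  apply hQ
  apply Polynomial.eq_zero_of_infinite_isRoot
  refine (Set.infinite_range_of_injective (IsFractionRing.injective R K)).mono ?_
  rintro _ ⟨m, rfl⟩
  exact h m

lemma aux_span {R : Type*} [CommRing R] [IsDomain R] [IsPrincipalIdealRing R]
    (w : R → R) (h0 : ∃ m, w m ≠ 0) (h : ∀ p : R, Prime p → ∃ m : R, ¬ p ∣ w m) :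
    Ideal.span (Set.range w) = ⊤ := by
  obtain ⟨g, hg⟩ := IsPrincipalIdealRing.principal (Ideal.span (Set.range w))
  have hd : ∀ m, g ∣ w m := fun m => by
    have : w m ∈ Ideal.span (Set.range w) := Ideal.subset_span ⟨m, rfl⟩
    rw [hg] at this
    exact Ideal.mem_span_singleton.1 this
  rw [hg]
  refine Ideal.span_singleton_eq_top.2 ?_
  by_contra hu
  have hg0 : g ≠ 0 := by
    rintro rfl
    obtain ⟨m, hm⟩ := h0
    exact hm (zero_dvd_iff.1 (hd m))
  obtain ⟨p, hp, hpg⟩ := WfDvdMonoid.exists_irreducible_factor hu hg0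
  obtain ⟨m, hm⟩ := h p hp.prime
  exact hm (hpg.trans (hd m))

lemma aux_unit {R K : Type*} [CommRing R] [IsDomain R] [IsPrincipalIdealRing R]
    [Field K] [Algebra R K] [IsFractionRing R K] (v W : R → R) (e : K) (G : R)
    (hv : Ideal.span (Set.range v) = ⊤) (hW : Ideal.span (Set.range W) = Ideal.span {G})
    (he : ∀ m, algebraMap R K (v m) = e * algebraMap R K (W m)) :
    ∃ u : Rˣ, e * algebraMap R K G = algebraMap R K u := by
  have h1 : ∀ x ∈ Ideal.span (Set.range W), ∃ r, e * algebraMap R K x = algebraMap R K r := by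
    intro x hx
    induction hx using Submodule.span_induction with
    | mem x hx => obtain ⟨m, rfl⟩ := hx; exact ⟨v m, (he m).symm⟩
    | zero => exact ⟨0, by simp⟩
    | add x y _ _ hx hy =>
      obtain ⟨a, ha⟩ := hx
      obtain ⟨b, hb⟩ := hy
      exact ⟨a + b, by rw [map_add, map_add, mul_add, ha, hb]⟩
    | smul c x _ hx =>
      obtain ⟨a, ha⟩ := hx
      exact ⟨c * a, by rw [smul_eq_mul, map_mul, map_mul, ← ha]; ring⟩
  obtain ⟨r, hr⟩ := h1 G (hW ▸ Ideal.mem_span_singleton_self G)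
  have h2 : Ideal.span (Set.range v) ≤ Ideal.span {r} := by
    rw [Ideal.span_le]
    rintro _ ⟨m, rfl⟩
    have : W m ∈ Ideal.span (Set.range W) := Ideal.subset_span ⟨m, rfl⟩
    rw [hW, Ideal.mem_span_singleton] at this
    obtain ⟨c, hc⟩ := this
    refine Ideal.mem_span_singleton.2 ⟨c, IsFractionRing.injective R K ?_⟩
    rw [he, hc, map_mul, map_mul, ← hr, mul_assoc]
  rw [hv, top_le_iff, Ideal.span_singleton_eq_top] at h2
  exact ⟨h2.unit, hr⟩

lemma aux_prim {R K : Type*} [CommRing R] [IsDomain R] [IsPrincipalIdealRing R]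
    [Infinite R] [Field K] [Algebra R K] [IsFractionRing R K] (Q : K[X]) (hQ : Q ≠ 0) :
    ∃ (c : K) (w : R → R), c ≠ 0 ∧
      (∀ m, algebraMap R K (w m) = (C c * Q).eval (algebraMap R K m)) ∧
      (∀ p : R, Prime p → ∃ m : R, ¬ p ∣ w m) := by
  obtain ⟨b, hb0, hb⟩ := IsLocalization.integerNormalization_spec (nonZeroDivisors R) Q
  set q := IsLocalization.integerNormalization (nonZeroDivisors R) Q
  have hbK : algebraMap R K b ≠ 0 := IsFractionRing.to_map_ne_zero_of_mem_nonZeroDivisors hb0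
  have hq : ∀ m, algebraMap R K (q.eval m) = algebraMap R K b * Q.eval (algebraMap R K m) := by
    intro m
    rw [← Polynomial.eval_map_apply, hb, ← IsScalarTower.algebraMap_smul K b Q, eval_smul,
      smul_eq_mul]
  obtain ⟨g, hg⟩ := IsPrincipalIdealRing.principal (Ideal.span (Set.range fun m => q.eval m))
  have hd : ∀ m, g ∣ q.eval m := fun m => by
    have : q.eval m ∈ Ideal.span (Set.range fun m => q.eval m) := Ideal.subset_span ⟨m, rfl⟩
    rw [hg] at this
    exact Ideal.mem_span_singleton.1 this
  choose w hw using hd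
  have hg0 : g ≠ 0 := by
    rintro rfl
    obtain ⟨m, hm⟩ := aux_ne (R := R) Q hQ
    have h1 := hq m
    rw [hw m, zero_mul, map_zero] at h1
    exact mul_ne_zero hbK hm h1.symm
  have hgK : algebraMap R K g ≠ 0 := by
    rwa [Ne, IsFractionRing.to_map_eq_zero_iff]
  refine ⟨algebraMap R K b / algebraMap R K g, w, div_ne_zero hbK hgK, ?_, ?_⟩
  · intro m
    have h1 := hq m
    rw [hw m, map_mul] at h1
    rw [eval_mul, eval_C, div_mul_eq_mul_div, ← h1, mul_div_cancel_left₀ _ hgK]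
  · intro p hp
    by_contra! h
    have h1 : Ideal.span (Set.range fun m => q.eval m) ≤ Ideal.span {g * p} := by
      rw [Ideal.span_le]
      rintro _ ⟨m, rfl⟩
      refine Ideal.mem_span_singleton.2 ?_
      change g * p ∣ q.eval m
      rw [hw m]
      exact mul_dvd_mul_left g (h m)
    rw [hg] at h1
    have h2 := Ideal.mem_span_singleton.1 (h1 (Ideal.mem_span_singleton_self g))
    have h3 : g * p ∣ g * 1 := by rwa [mul_one]
    exact hp.not_isUnit (isUnit_of_dvd_one ((mul_dvd_mul_iff_left hg0).1 h3))

lemma aux_mult {K : Type*} [Field K] {n : ℕ} (Pl : Fin n → K[X]) (α : Fin n → ℕ) (c : K)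
    (hc : c ≠ 0) (hirr : ∀ i, Irreducible (Pl i))
    (hna : ∀ i j, i ≠ j → ¬ Associated (Pl i) (Pl j)) (i : Fin n) :
    emultiplicity (Pl i) (C c * ∏ i, Pl i ^ α i) = α i := by
  have hp := (hirr i).prime
  have h1 : emultiplicity (Pl i) (C c) = 0 := by
    rw [emultiplicity_eq_zero]
    intro h
    exact (hirr i).not_isUnit (isUnit_of_dvd_unit h (isUnit_C.2 hc.isUnit))
  rw [emultiplicity_mul hp, h1, zero_add, Finset.emultiplicity_prod hp,
    Finset.sum_eq_single i]
  · rw [emultiplicity_pow_self hp.ne_zero hp.not_isUnit]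
  · intro j _ hj
    rw [emultiplicity_eq_zero]
    intro h
    exact hna i j hj.symm ((hirr i).associated_of_dvd (hirr j) (hp.dvd_of_dvd_pow h))
  · simp

lemma aux_exists_s11 {K : Type*} [Field K] (P : K[X]) (hP : P ≠ 0) :
    ∃ (e : K) (n : ℕ) (Q : Fin n → K[X]) (α : Fin n → ℕ), e ≠ 0 ∧ (∀ i, 1 ≤ α i) ∧
      (∀ i, Irreducible (Q i)) ∧ (∀ i j, i ≠ j → ¬ Associated (Q i) (Q j)) ∧
      P = C e * ∏ i, Q i ^ α i := by
  classical
  let s := (UniqueFactorizationMonoid.normalizedFactors P).toFinset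
  have hs : ∀ i : Fin s.card, ((s.equivFin.symm i : s) : K[X]) ∈
      UniqueFactorizationMonoid.normalizedFactors P := fun i =>
    Multiset.mem_toFinset.1 (s.equivFin.symm i).2
  obtain ⟨u, hu⟩ := UniqueFactorizationMonoid.prod_normalizedFactors hP
  obtain ⟨e, he, heu⟩ := Polynomial.isUnit_iff.1 u.isUnit
  refine ⟨e, s.card, fun i => s.equivFin.symm i,
    fun i => (UniqueFactorizationMonoid.normalizedFactors P).count (s.equivFin.symm i : K[X]),
    he.ne_zero, fun i => Multiset.one_le_count_iff_mem.2 (hs i),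
    fun i => UniqueFactorizationMonoid.irreducible_of_normalized_factor _ (hs i), ?_, ?_⟩
  · intro i j hij h
    apply hij
    apply s.equivFin.symm.injective
    apply Subtype.ext
    have := normalize_eq_normalize_iff_associated.2 h
    rwa [UniqueFactorizationMonoid.normalize_normalized_factor _ (hs i),
      UniqueFactorizationMonoid.normalize_normalized_factor _ (hs j)] at this
  · conv_lhs => rw [← hu]
    rw [← heu, mul_comm]
    congr 1
    rw [Finset.prod_multiset_count]
    rw [← Finset.prod_coe_sort]
    exact (Equiv.prod_comp s.equivFin.symm (fun x : s => (x : K[X]) ^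
      (UniqueFactorizationMonoid.normalizedFactors P).count (x : K[X]))).symm

lemma aux_match {K : Type*} [Field K] {n n' : ℕ} (Pl : Fin n → K[X]) (α : Fin n → ℕ)
    (Pl' : Fin n' → K[X]) (α' : Fin n' → ℕ) (c c' : K) (hc : c ≠ 0) (hc' : c' ≠ 0)
    (hirr : ∀ i, Irreducible (Pl i)) (hirr' : ∀ i, Irreducible (Pl' i)) (hα : ∀ i, 1 ≤ α i)
    (h : C c * ∏ i, Pl i ^ α i = C c' * ∏ i, Pl' i ^ α' i) (i : Fin n) :
    ∃ j, Associated (Pl i) (Pl' j) := by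
  have hp := (hirr i).prime
  have hd : Pl i ∣ C c' * ∏ i, Pl' i ^ α' i := by
    rw [← h]
    exact ((dvd_pow_self _ (by have := hα i; omega)).trans
      (Finset.dvd_prod_of_mem (fun i => Pl i ^ α i) (Finset.mem_univ i))).mul_left _
  rcases hp.dvd_or_dvd hd with h1 | h1
  · exact absurd (isUnit_of_dvd_unit h1 (isUnit_C.2 hc'.isUnit)) hp.not_isUnit
  · obtain ⟨j, _, hj⟩ := (hp.dvd_finsetProd_iff _).1 h1
    exact ⟨j, (hirr i).associated_of_dvd (hirr' j) (hp.dvd_of_dvd_pow hj)⟩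

/-- Totally primitive factorization: every nonconstant totally primitive
`P ∈ K[X]` (integral values witnessed by `v`) can be written, uniquely up to units of `R`
and the order of the factors, as `P = (1/Γ) · ∏ i, (P i)^(α i)` with `Γ ∈ R` nonzero,
`α i ≥ 1`, the `P i` pairwise non-associate totally primitive polynomials irreducible in
`K[X]` (each with integral values witnessed by `w i`), and `Γ` a gcd of the value set
`{∏ i, P i (m)^(α i) : m ∈ R}`. -/
theorem stmt11 {R K : Type*} [CommRing R] [IsDomain R] [IsPrincipalIdealRing R]
    [Infinite R] [Field K] [Algebra R K] [IsFractionRing R K]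
    (P : K[X]) (v : R → R)
    (hval : ∀ m, algebraMap R K (v m) = P.eval (algebraMap R K m))
    (hnc : 0 < P.natDegree)
    (htp : ∀ p : R, Prime p → ∃ m : R, ¬ p ∣ v m) :
    ∃ (Γ : R) (n : ℕ) (Pl : Fin n → K[X]) (α : Fin n → ℕ) (w : Fin n → R → R),
      Γ ≠ 0 ∧ (∀ i, 1 ≤ α i) ∧
      (∀ i, Irreducible (Pl i)) ∧
      (∀ i m, algebraMap R K (w i m) = (Pl i).eval (algebraMap R K m)) ∧
      (∀ i, ∀ p : R, Prime p → ∃ m : R, ¬ p ∣ w i m) ∧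
      (∀ i j, i ≠ j → ¬ Associated (Pl i) (Pl j)) ∧
      P = Polynomial.C (algebraMap R K Γ)⁻¹ * ∏ i, Pl i ^ α i ∧
      (∀ m : R, Γ ∣ ∏ i, w i m ^ α i) ∧
      (∀ d : R, (∀ m : R, d ∣ ∏ i, w i m ^ α i) → d ∣ Γ) ∧
      (∀ (Γ' : R) (n' : ℕ) (Pl' : Fin n' → K[X]) (α' : Fin n' → ℕ) (w' : Fin n' → R → R),
        Γ' ≠ 0 → (∀ i, 1 ≤ α' i) →
        (∀ i, Irreducible (Pl' i)) →
        (∀ i m, algebraMap R K (w' i m) = (Pl' i).eval (algebraMap R K m)) →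
        (∀ i, ∀ p : R, Prime p → ∃ m : R, ¬ p ∣ w' i m) →
        (∀ i j, i ≠ j → ¬ Associated (Pl' i) (Pl' j)) →
        P = Polynomial.C (algebraMap R K Γ')⁻¹ * ∏ i, Pl' i ^ α' i →
        (∀ m : R, Γ' ∣ ∏ i, w' i m ^ α' i) →
        (∀ d : R, (∀ m : R, d ∣ ∏ i, w' i m ^ α' i) → d ∣ Γ') →
        Associated Γ Γ' ∧ ∃ σ : Fin n ≃ Fin n', (∀ i, α' (σ i) = α i) ∧
          ∀ i, ∃ u : Rˣ, Pl' (σ i) = Polynomial.C (algebraMap R K (u : R)) * Pl i) := by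
  have hP0 : P ≠ 0 := by rintro rfl; simp at hnc
  have hv : Ideal.span (Set.range v) = ⊤ := by
    refine aux_span v ?_ htp
    obtain ⟨m, hm⟩ := aux_ne (R := R) P hP0
    refine ⟨m, fun h => hm ?_⟩
    rw [← hval, h, map_zero]
  obtain ⟨e, n, Q, α, he, hα, hQ, hna, hPe⟩ := aux_exists_s11 P hP0
  choose c w hc hw hwp using fun i => aux_prim (R := R) (Q i) (hQ i).ne_zero
  have hass : ∀ i, Associated (C (c i) * Q i) (Q i) := fun i =>
    associated_unit_mul_left _ _ (isUnit_C.2 (hc i).isUnit)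
  have hirr : ∀ i, Irreducible (C (c i) * Q i) := fun i => (hass i).irreducible_iff.2 (hQ i)
  have hna2 : ∀ i j, i ≠ j → ¬ Associated (C (c i) * Q i) (C (c j) * Q j) := fun i j hij h =>
    hna i j hij ((hass i).symm.trans (h.trans (hass j)))
  have hcp : ∏ i, c i ^ α i ≠ 0 := Finset.prod_ne_zero_iff.2 fun i _ => pow_ne_zero _ (hc i)
  set e' : K := e * (∏ i, c i ^ α i)⁻¹ with he'
  have he'0 : e' ≠ 0 := mul_ne_zero he (inv_ne_zero hcp)
  have hPe' : P = C e' * ∏ i, (C (c i) * Q i) ^ α i := by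
    simp_rw [mul_pow]
    rw [Finset.prod_mul_distrib, hPe]
    simp_rw [← C_pow]
    rw [← map_prod, ← mul_assoc, ← C_mul, he', inv_mul_cancel_right₀ hcp]
  let W : R → R := fun m => ∏ i, w i m ^ α i
  obtain ⟨G, hG⟩ := IsPrincipalIdealRing.principal (Ideal.span (Set.range W))
  have hvW : ∀ m, algebraMap R K (v m) = e' * algebraMap R K (W m) := by
    intro m
    rw [hval]
    conv_lhs => rw [hPe']
    simp only [W, map_prod, map_pow, hw, eval_mul, eval_C, eval_prod, eval_pow]
  obtain ⟨u, hu⟩ := aux_unit v W e' G hv hG hvW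
  have hu0 : algebraMap R K (u : R) ≠ 0 := by
    rw [Ne, IsFractionRing.to_map_eq_zero_iff]; exact u.ne_zero
  have hG0 : algebraMap R K G ≠ 0 := by
    intro h
    rw [h, mul_zero] at hu
    exact hu0 hu.symm
  have huu : algebraMap R K (u : R) * algebraMap R K ((u⁻¹ : Rˣ) : R) = 1 := by
    rw [← map_mul]; simp
  have hΓ : (algebraMap R K (((u⁻¹ : Rˣ) : R) * G))⁻¹ = e' := by
    apply inv_eq_of_mul_eq_one_left
    rw [map_mul, ← huu, ← hu]
    ring
  refine ⟨((u⁻¹ : Rˣ) : R) * G, n, fun i => C (c i) * Q i, α, w, ?_, hα, hirr, hw, hwp, hna2,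
    ?_, ?_, ?_, ?_⟩
  · refine mul_ne_zero (Units.ne_zero _) ?_
    rintro rfl
    simp at hG0
  · rw [hΓ]; exact hPe'
  · intro m
    rw [Units.mul_left_dvd]
    have : W m ∈ Ideal.span (Set.range W) := Ideal.subset_span ⟨m, rfl⟩
    rw [hG] at this
    exact Ideal.mem_span_singleton.1 this
  · intro d hd
    apply Dvd.dvd.mul_left
    have h1 : Ideal.span (Set.range W) ≤ Ideal.span {d} := by
      rw [Ideal.span_le]
      rintro _ ⟨m, rfl⟩
      exact Ideal.mem_span_singleton.2 (hd m)
    rw [hG] at h1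
    exact Ideal.mem_span_singleton.1 (h1 (Ideal.mem_span_singleton_self G))
  · intro Γ' n' Pl' α' w' hΓ' hα' hirr' hw' hwp' hna' hP' _ _
    have hΓK : (algebraMap R K Γ')⁻¹ ≠ 0 := by
      rw [Ne, inv_eq_zero, IsFractionRing.to_map_eq_zero_iff]; exact hΓ'
    have hEq := hPe'.symm.trans hP'
    choose f hf using aux_match _ α Pl' α' _ _ he'0 hΓK hirr hirr' hα hEq
    choose g hg using aux_match Pl' α' _ α _ _ hΓK he'0 hirr' hirr hα' hEq.symm
    let σ : Fin n ≃ Fin n' := 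
      { toFun := f
        invFun := g
        left_inv := fun i => by
          by_contra h
          exact hna2 _ _ h ((hf i).trans (hg (f i))).symm
        right_inv := fun i => by
          by_contra h
          exact hna' _ _ h ((hg i).trans (hf (g i))).symm }
    have hσ : ∀ i, Associated (C (c i) * Q i) (Pl' (σ i)) := hf
    have hασ : ∀ i, α' (σ i) = α i := by
      intro i
      have h1 := aux_mult _ α _ he'0 hirr hna2 i
      have h2 := aux_mult Pl' α' _ hΓK hirr' hna' (σ i)
      rw [← hEq, emultiplicity_eq_of_associated_left (hσ i), h1] at h2
      exact_mod_cast h2.symm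
    have hun : ∀ i, ∃ u : Rˣ, Pl' (σ i) = C (algebraMap R K (u : R)) * (C (c i) * Q i) := by
      intro i
      obtain ⟨y, hy⟩ := hσ i
      obtain ⟨a, ha, hay⟩ := Polynomial.isUnit_iff.1 y.isUnit
      have hspan : ∀ (T : K[X]) (t : R → R), T ≠ 0 →
          (∀ m, algebraMap R K (t m) = T.eval (algebraMap R K m)) →
          (∀ p : R, Prime p → ∃ m : R, ¬ p ∣ t m) → Ideal.span (Set.range t) = ⊤ := by
        intro T t hT ht htp
        refine aux_span t ?_ htp
        obtain ⟨m, hm⟩ := aux_ne (R := R) T hT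
        refine ⟨m, fun h => hm ?_⟩
        rw [← ht, h, map_zero]
      obtain ⟨z, hz⟩ := aux_unit (K := K) (w' (σ i)) (w i) a 1
        (hspan _ _ (hirr' _).ne_zero (hw' _) (hwp' _))
        (by rw [hspan _ _ (hirr i).ne_zero (hw i) (hwp i)]; simp)
        (by intro m; rw [hw', hw, ← hy, ← hay, eval_mul, eval_C, mul_comm])
      rw [map_one, mul_one] at hz
      exact ⟨z, by rw [← hz, ← hy, ← hay, mul_comm]⟩
    refine ⟨?_, σ, hασ, hun⟩
    choose z hz using hun
    have hprod : ∏ j, Pl' j ^ α' j = C (algebraMap R K ((∏ i, z i ^ α i : Rˣ) : R)) *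
        ∏ i, (C (c i) * Q i) ^ α i := by
      rw [← Equiv.prod_comp σ]
      simp_rw [hασ, hz, mul_pow _ (_ * _)]
      rw [Finset.prod_mul_distrib]
      simp
    have hne : ∏ i, (C (c i) * Q i) ^ α i ≠ 0 :=
      Finset.prod_ne_zero_iff.2 fun i _ => pow_ne_zero _ (hirr i).ne_zero
    rw [hprod, ← mul_assoc, ← C_mul] at hEq
    have h3 := C_injective (mul_right_cancel₀ hne hEq)
    refine ⟨∏ i, z i ^ α i, IsFractionRing.injective R K ?_⟩
    rw [← hΓ] at h3
    have hA : algebraMap R K (((u⁻¹ : Rˣ) : R) * G) ≠ 0 := by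
      intro h
      rw [h, inv_zero] at hΓ
      exact he'0 hΓ.symm
    have hB : algebraMap R K Γ' ≠ 0 := by simpa using hΓK
    rw [map_mul]
    generalize algebraMap R K (((u⁻¹ : Rˣ) : R) * G) = A at *
    generalize algebraMap R K ((∏ i, z i ^ α i : Rˣ) : R) = B at *
    field_simp at h3
    rw [h3]
    try ring
end

section
/- Let P_1, …, P_n ∈ ℚ[X] be totally primitive polynomials (with respect to ℤ), and suppose there exists an infinite set S ⊆ ℕ such that for every m ∈ S and every i, P_i(m) is a prime number. Then each P_i is nonconstant, irreducible in ℚ[X], and has positive leading coefficient, and the product P_1·P_2⋯P_n is totally primitive. -/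
open Polynomial

lemma aux_eventually (Q : ℚ[X]) (h : 0 < Q.natDegree) (C : ℚ) :
    ∀ᶠ m : ℕ in Filter.atTop, C < |Q.eval (m : ℚ)| := by
  have h1 := Polynomial.abs_tendsto_atTop Q (natDegree_pos_iff_degree_pos.mp h)
  exact (h1.comp tendsto_natCast_atTop_atTop).eventually_gt_atTop C

lemma aux_int (Q : ℚ[X]) : ∃ d : ℤ, d ≠ 0 ∧ ∃ A : ℤ[X], ∀ m : ℤ,
    ((A.eval m : ℤ) : ℚ) = d * Q.eval (m : ℚ) := by
  obtain ⟨b, hb, h⟩ := IsLocalization.integerNormalization_spec (nonZeroDivisors ℤ) Q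
  refine ⟨b, nonZeroDivisors.ne_zero hb, IsLocalization.integerNormalization (nonZeroDivisors ℤ) Q, fun m => ?_⟩
  have := congrArg (Polynomial.eval (m : ℚ)) h
  have h2 := Polynomial.eval_intCast_map (algebraMap ℤ ℚ)
    (IsLocalization.integerNormalization (nonZeroDivisors ℤ) Q) m
  rw [h2] at this
  simpa using this

lemma aux_div (a b p c : ℤ) (hp : Prime p) (hc : c ≠ 0) (h : a * b = c * p) :
    |a| ≤ |c| ∨ |b| ≤ |c| := by
  have hp0 := hp.ne_zero
  rcases hp.dvd_or_dvd (Dvd.intro_left c h.symm) with ⟨k, rfl⟩ | ⟨k, rfl⟩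
  · right
    have : b ∣ c := ⟨k, mul_right_cancel₀ hp0 (by linear_combination -h)⟩
    exact Int.le_of_dvd (abs_pos.mpr hc) ((abs_dvd_abs _ _).mpr this)
  · left
    have : a ∣ c := ⟨k, mul_right_cancel₀ hp0 (by linear_combination -h)⟩
    exact Int.le_of_dvd (abs_pos.mpr hc) ((abs_dvd_abs _ _).mpr this)

/-- If `P_1, …, P_n ∈ ℚ[X]` are totally primitive with respect to `ℤ`
(integer values witnessed by `v i : ℤ → ℤ`) and there is an infinite set `S ⊆ ℕ` such that
`P i (m)` is a prime number for every `m ∈ S` and every `i`, then each `P i` is nonconstant,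
irreducible in `ℚ[X]`, with positive leading coefficient, and the product `∏ i, P i` is
totally primitive. -/
theorem stmt17 (n : ℕ) (Pl : Fin n → ℚ[X]) (v : Fin n → ℤ → ℤ)
    (hval : ∀ i (m : ℤ), ((v i m : ℤ) : ℚ) = (Pl i).eval (m : ℚ))
    (htp : ∀ i, ∀ p : ℕ, p.Prime → ∃ m : ℤ, ¬ (p : ℤ) ∣ v i m)
    (S : Set ℕ) (hS : S.Infinite)
    (hprime : ∀ m ∈ S, ∀ i, ∃ p : ℕ, p.Prime ∧ v i (m : ℤ) = (p : ℤ)) :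
    (∀ i, 0 < (Pl i).natDegree ∧ Irreducible (Pl i) ∧ 0 < (Pl i).leadingCoeff) ∧
    (∀ p : ℕ, p.Prime → ∃ m : ℤ, ¬ (p : ℤ) ∣ ∏ i, v i m) := by
  have hfreq : ∃ᶠ m in Filter.atTop, m ∈ S := Nat.frequently_atTop_iff_infinite.mpr hS
  have hdeg : ∀ i, 0 < (Pl i).natDegree := by
    intro i
    by_contra h0
    obtain ⟨c, hc⟩ := natDegree_eq_zero.mp (Nat.eq_zero_of_not_pos h0)
    obtain ⟨m, hm⟩ := hS.nonempty
    obtain ⟨p, hp, hv⟩ := hprime m hm i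
    obtain ⟨k, hk⟩ := htp i p hp
    apply hk
    have h1 := hval i m
    have h2 := hval i k
    rw [← hc, eval_C] at h1 h2
    have : v i k = v i m := by exact_mod_cast h2.trans h1.symm
    rw [this, hv]
  refine ⟨fun i => ⟨hdeg i, ?_, ?_⟩, ?_⟩
  · have hne : Pl i ≠ 0 := by
      intro h
      have := hdeg i
      simp [h] at this
    refine ⟨fun hu => ?_, fun a b hab => ?_⟩
    · have := natDegree_eq_zero_of_isUnit hu
      have := hdeg i
      omega
    by_contra hcon
    push Not at hcon
    have ha0 : a ≠ 0 := by rintro rfl; simp at hab; exact hne hab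
    have hb0 : b ≠ 0 := by rintro rfl; simp at hab; exact hne hab
    have key : ∀ q : ℚ[X], q ≠ 0 → ¬ IsUnit q → 0 < q.natDegree := fun q h0 h =>
      natDegree_pos_iff_degree_pos.mpr (degree_pos_of_ne_zero_of_nonunit h0 h)
    obtain ⟨d, hd, A, hA⟩ := aux_int a
    obtain ⟨e, he, B, hB⟩ := aux_int b
    have Ea := aux_eventually a (key a ha0 hcon.1) |((e : ℤ) : ℚ)|
    have Eb := aux_eventually b (key b hb0 hcon.2) |((d : ℤ) : ℚ)|
    obtain ⟨m, hm, h1, h2⟩ := (hfreq.and_eventually (Ea.and Eb)).exists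
    obtain ⟨p, hp, hv⟩ := hprime m hm i
    have hdq : (0 : ℚ) < |(d : ℚ)| := abs_pos.mpr (by exact_mod_cast hd)
    have heq : (0 : ℚ) < |(e : ℚ)| := abs_pos.mpr (by exact_mod_cast he)
    have hA' := hA m
    have hB' := hB m
    have hP := hval i m
    rw [hab, eval_mul, hv] at hP
    push_cast at hA' hB' hP
    have hmul : A.eval (m : ℤ) * B.eval (m : ℤ) = (d * e) * (p : ℤ) := by
      have : ((A.eval (m : ℤ) : ℤ) : ℚ) * ((B.eval (m : ℤ) : ℤ) : ℚ) = (d * e) * (p : ℚ) := by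
        rw [hA', hB', hP]; ring
      exact_mod_cast this
    rcases aux_div _ _ _ _ (Nat.prime_iff_prime_int.mp hp) (mul_ne_zero hd he) hmul with h | h
    · have h' : |((A.eval (m : ℤ) : ℤ) : ℚ)| ≤ |(d : ℚ) * e| := by exact_mod_cast h
      rw [hA', abs_mul, abs_mul] at h'
      exact absurd (le_of_mul_le_mul_left h' hdq) (not_le.mpr h1)
    · have h' : |((B.eval (m : ℤ) : ℤ) : ℚ)| ≤ |(d : ℚ) * e| := by exact_mod_cast h
      rw [hB', abs_mul, abs_mul, mul_comm |(d : ℚ)|] at h'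
      exact absurd (le_of_mul_le_mul_left h' heq) (not_le.mpr h2)
  · by_contra hl
    have h1 := Polynomial.tendsto_atBot_of_leadingCoeff_nonpos (Pl i)
      (natDegree_pos_iff_degree_pos.mp (hdeg i)) (not_lt.mp hl)
    have h2 := (h1.comp (tendsto_natCast_atTop_atTop (R := ℚ))).eventually_lt_atBot 0
    obtain ⟨m, hm, h3⟩ := (hfreq.and_eventually h2).exists
    obtain ⟨p, hp, hv⟩ := hprime m hm i
    have hP := hval i m
    rw [hv] at hP
    push_cast at hP
    simp only [Function.comp] at h3
    rw [← hP] at h3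
    exact absurd h3 (not_lt.mpr (Nat.cast_nonneg p))
  · intro p hp
    have hE : ∀ᶠ m : ℕ in Filter.atTop, ∀ i, (p : ℚ) < |(Pl i).eval (m : ℚ)| :=
      Filter.eventually_all.mpr fun i => aux_eventually _ (hdeg i) _
    obtain ⟨m, hm, h3⟩ := (hfreq.and_eventually hE).exists
    refine ⟨m, fun hdvd => ?_⟩
    obtain ⟨i, -, hi⟩ := (Nat.prime_iff_prime_int.mp hp).exists_mem_finset_dvd hdvd
    obtain ⟨q, hq, hv⟩ := hprime m hm i
    have hP := hval i m
    have h4 := h3 i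
    rw [hv] at hP hi
    push_cast at hP
    rw [← hP, Nat.abs_cast] at h4
    have h5 : p < q := by exact_mod_cast h4
    have := (Nat.prime_dvd_prime_iff_eq hp hq).mp (by exact_mod_cast hi)
    omega
end

section
/- Let p be an odd prime number and let a be an integer with 1 < a < 4p such that gcd(a, p(p−1)) = 1. Then for every polynomial f ∈ 𝔽_p[t] (where 𝔽_p = ℤ/pℤ), the polynomial F(t) = f(t)^{4p} + t^a ∈ 𝔽_p[t] is not irreducible in 𝔽_p[t]. -/
open Polynomial

/-- Over a finite field of odd characteristic, the discriminant of a basis of an extension of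
even degree is not a square. -/
lemma discr_not_isSquare_of_even {K L : Type*} [Field K] [Fintype K] [Field L] [Algebra K L]
    [Finite L] [FiniteDimensional K L] (h2 : (2 : K) ≠ 0) (n : ℕ) (hn : Module.finrank K L = n)
    (heven : Even n) (b : Module.Basis (Fin n) K L) : ¬ IsSquare (Algebra.discr K b) := by
  subst hn
  rintro ⟨s, hs⟩
  have hpos : 0 < Module.finrank K L := Module.finrank_pos
  let φ := FiniteField.frobeniusAlgEquivOfAlgebraic K L
  let e : Fin (Module.finrank K L) ≃ Gal(L/K) :=
    Equiv.ofBijective _ (FiniteField.bijective_frobeniusAlgEquivOfAlgebraic_pow K L)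
  have he : ∀ i, e i = φ ^ i.1 := fun i => rfl
  have hord : φ ^ (Module.finrank K L) = 1 := by
    rw [← FiniteField.orderOf_frobeniusAlgEquivOfAlgebraic K L]; exact pow_orderOf_eq_one _
  have hrot : ∀ i, φ * e i = e (finRotate _ i) := by
    intro i
    rw [he, he, ← pow_succ']
    clear_value φ
    clear he e hs b heven
    obtain ⟨m, hm⟩ : ∃ m, Module.finrank K L = m + 1 := ⟨_, (Nat.succ_pred_eq_of_pos hpos).symm⟩
    generalize Module.finrank K L = N at *
    subst hm
    rw [coe_finRotate]
    split_ifs with h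
    · rw [h]; simpa using hord
    · rfl
  have hnz := Algebra.discr_not_zero_of_basis K b
  let M : Matrix (Fin (Module.finrank K L)) (Fin (Module.finrank K L)) L :=
    Matrix.of fun i j => e j (b i)
  have hMa : ∀ i j, M i j = e j (b i) := fun i j => rfl
  have hd : algebraMap K L (Algebra.discr K b) = M.det ^ 2 := by
    have hT : (Algebra.traceMatrix K b).map (algebraMap K L) = M * M.transpose := by
      ext i j
      rw [Matrix.map_apply, Algebra.traceMatrix_apply, Algebra.traceForm_apply,
        trace_eq_sum_automorphisms, Matrix.mul_apply, ← e.sum_comp]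
      simp [hMa]
    rw [Algebra.discr_def, RingHom.map_det, RingHom.mapMatrix_apply, hT, Matrix.det_mul,
      Matrix.det_transpose, pow_two]
  have hφ : φ M.det = - M.det := by
    rw [AlgEquiv.map_det]
    have : φ.mapMatrix M = M.submatrix id (finRotate _) := by
      ext i j
      simp only [AlgEquiv.mapMatrix_apply, Matrix.map_apply, Matrix.submatrix_apply, hMa, id, ← hrot]
      rfl
    rw [this, Matrix.det_permute', sign_finRotate]
    have ho : Odd (Module.finrank K L - 1) := Nat.Even.sub_odd hpos heven odd_one
    simp [ho.neg_one_pow]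
  have hφ' : φ M.det = M.det := by
    rw [hs, map_mul, ← pow_two] at hd
    rcases sq_eq_sq_iff_eq_or_eq_neg.1 hd.symm with h | h <;> rw [h] <;> simp
  have h0 : (2 : L) * M.det = 0 := by
    rw [two_mul]; nth_rw 1 [← hφ']; rw [hφ]; simp
  have h2L : (2 : L) ≠ 0 := by
    have := (map_ne_zero (algebraMap K L)).2 h2
    rwa [map_ofNat] at this
  have hdet : M.det = 0 := (mul_eq_zero.1 h0).resolve_left h2L
  rw [hdet] at hd
  apply hnz
  apply (algebraMap K L).injective
  rw [hd]; simp

/-- An irreducible polynomial whose degree is divisible by four, with derivative `c * X ^ k`,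
`k` even, cannot exist over a finite field of odd characteristic. -/
lemma not_irreducible_of_derivative {K : Type*} [Field K] [Fintype K] (h2 : (2 : K) ≠ 0)
    (F : K[X]) (h4 : 4 ∣ F.natDegree) (c : K) (k : ℕ) (hk : Even k)
    (hF : derivative F = C c * X ^ k) : ¬ Irreducible F := by
  intro hirr
  have : Fact (Irreducible F) := ⟨hirr⟩
  let pb := AdjoinRoot.powerBasis hirr.ne_zero
  have : FiniteDimensional K (AdjoinRoot F) := pb.finite
  have : Finite (AdjoinRoot F) := Module.finite_of_finite K
  have hdim : pb.dim = F.natDegree := AdjoinRoot.powerBasis_dim hirr.ne_zero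
  have h4' : 4 ∣ pb.dim := hdim ▸ h4
  have hev : Even pb.dim := by
    obtain ⟨m, hm⟩ := h4'; exact ⟨2 * m, by omega⟩
  refine discr_not_isSquare_of_even h2 pb.dim pb.finrank hev pb.basis ?_
  rw [Algebra.discr_powerBasis_eq_norm, pb.finrank]
  have hsgn : Even (pb.dim * (pb.dim - 1) / 2) := by
    obtain ⟨m, hm⟩ := h4'
    refine ⟨m * (pb.dim - 1), ?_⟩
    rw [hm]
    apply Nat.div_eq_of_eq_mul_left two_pos
    ring
  rw [hsgn.neg_one_pow, one_mul]
  have hgen : pb.gen = AdjoinRoot.root F := AdjoinRoot.powerBasis_gen hirr.ne_zero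
  have hmin : minpoly K pb.gen = F * C (F.leadingCoeff⁻¹) := by
    rw [hgen]; exact AdjoinRoot.minpoly_root hirr.ne_zero
  rw [hmin, derivative_mul, derivative_C, mul_zero, add_zero, hF]
  simp only [map_mul, aeval_C, map_pow, aeval_X, Algebra.norm_algebraMap, pb.finrank]
  exact ((hev.isSquare_pow _).mul (hk.isSquare_pow _)).mul (hev.isSquare_pow _)

/-- Let `p` be an odd prime and `a` an integer with `1 < a < 4p` and
`gcd(a, p(p−1)) = 1`.  Then for every `f ∈ 𝔽_p[t]`, the polynomial `f^{4p} + t^a` is not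
irreducible in `𝔽_p[t]`. -/
theorem stmt18 (p : ℕ) (hp : p.Prime) (hodd : Odd p)
    (a : ℕ) (ha1 : 1 < a) (ha2 : a < 4 * p) (hcop : Nat.Coprime a (p * (p - 1)))
    (f : Polynomial (ZMod p)) :
    ¬ Irreducible (f ^ (4 * p) + (X : Polynomial (ZMod p)) ^ a) := by
  have : Fact p.Prime := ⟨hp⟩
  have hcop' : Nat.Coprime (p - 1) a := (Nat.Coprime.coprime_mul_left_right hcop).symm
  have haodd : Odd a := by
    have h2 : 2 ∣ p - 1 := by obtain ⟨m, hm⟩ := hodd; exact ⟨m, by omega⟩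
    exact (Nat.coprime_two_left (n := a)).1 (hcop'.coprime_dvd_left h2)
  have h2 : (2 : ZMod p) ≠ 0 := by
    intro h
    have h' : ((2 : ℕ) : ZMod p) = 0 := by exact_mod_cast h
    rw [ZMod.natCast_eq_zero_iff, Nat.prime_dvd_prime_iff_eq hp Nat.prime_two] at h'
    subst h'
    exact absurd hodd (by decide)
  by_cases hn : f.natDegree = 0
  · obtain ⟨c, rfl⟩ := natDegree_eq_zero.1 hn
    intro hirr
    obtain ⟨b, hb⟩ : ∃ b : ZMod p, b ^ a = - c ^ (4 * p) := by
      by_cases hc : c = 0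
      · exact ⟨0, by simp [hc, hp.ne_zero]; omega⟩
      · have hcard : (Nat.card (ZMod p)ˣ).Coprime a := by
          rw [Nat.card_eq_fintype_card, ZMod.card_units]; exact hcop'
        have hne : - c ^ (4 * p) ≠ 0 := neg_ne_zero.2 (pow_ne_zero _ hc)
        obtain ⟨u, hu⟩ := (powCoprime hcard).surjective (Units.mk0 _ hne)
        refine ⟨u, ?_⟩
        have := congrArg Units.val hu
        simpa using this
    have hdeg := degree_eq_one_of_irreducible_of_root hirr (x := b) (by simp [hb])
    rw [← C_pow, add_comm, degree_X_pow_add_C (by omega)] at hdeg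
    have : a = 1 := by exact_mod_cast hdeg
    omega
  · have hdeg : (f ^ (4 * p) + (X : Polynomial (ZMod p)) ^ a).natDegree = 4 * p * f.natDegree := by
      rw [natDegree_add_eq_left_of_natDegree_lt, natDegree_pow]
      rw [natDegree_X_pow, natDegree_pow]
      have : 1 ≤ f.natDegree := Nat.one_le_iff_ne_zero.2 hn
      nlinarith
    refine not_irreducible_of_derivative h2 _ ?_ (a : ZMod p) (a - 1) ?_ ?_
    · rw [hdeg, mul_assoc]; exact dvd_mul_right _ _
    · exact Nat.Odd.sub_odd haodd odd_one
    · simp [derivative_pow]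
end
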